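/- arXiv:2402.14691 — 2 statements merged into one kernel-verified Lean document; each statement's English description precedes it below -/
import Mathlib

section
/- Let W≥0 and h>0 with h ≥ max_i max(P_{i+1}^{n−1}−P_i^{n−1}, P_{i+1}ⁿ−P_iⁿ), and assume |w_i| ≤ W for all i∈{1,…,N_p}. Then there exists a constant C>0 depending only on W (independent of Δt, h, the nodes N_p, and φ) such that for every φ∈C²([a,b]×[t^{n−1},tⁿ]): ( ∫_a^b [ ((Π_h(tⁿ)φ(·,tⁿ))(x) − (Π_h(t^{n−1})φ(·,t^{n−1}))(x))/Δt − (1/Δt)∫_{t^{n−1}}^{tⁿ} (Π_h(t)(∂_tφ(·,t)))(x) dt ]² dx )^{1/2} ≤ (C·h/√Δt) · ( ∫_{t^{n−1}}^{tⁿ} ∫_a^b (∂ₓ²φ(x,t))² dx dt )^{1/2}. -/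
open MeasureTheory

/-- The continuous piecewise-affine hat function associated with node `i` of the
strictly increasing partition `Q 1 < Q 2 < … < Q N`.  On `[Q 1, Q N]` it is the usual
P1 basis function satisfying `hatFun Q N i (Q j) = δ_{ij}`. -/
noncomputable def hatFun (Q : ℕ → ℝ) (N i : ℕ) (x : ℝ) : ℝ :=
  max 0 (min
    ((x - (if i = 1 then Q 1 - 1 else Q (i - 1))) /
      (Q i - (if i = 1 then Q 1 - 1 else Q (i - 1))))
    (((if i = N then Q N + 1 else Q (i + 1)) - x) /
      ((if i = N then Q N + 1 else Q (i + 1)) - Q i)))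

/-- The P1 Lagrange interpolant of `f` on the partition `Q 1 < … < Q N`. -/
noncomputable def interp (Q : ℕ → ℝ) (N : ℕ) (f : ℝ → ℝ) (x : ℝ) : ℝ :=
  ∑ i ∈ Finset.Icc 1 N, f (Q i) * hatFun Q N i x

lemma cs_aux (f : ℝ → ℝ) (p q : ℝ) (hpq : p < q)
    (hf : IntervalIntegrable f volume p q)
    (hf2 : IntervalIntegrable (fun x => f x ^ 2) volume p q) :
    (∫ x in p..q, f x) ^ 2 ≤ (q - p) * ∫ x in p..q, f x ^ 2 := by
  have hd : 0 < q - p := sub_pos.2 hpq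
  set m := (∫ x in p..q, f x) / (q - p) with hm
  have h0 : 0 ≤ ∫ x in p..q, (f x - m) ^ 2 :=
    intervalIntegral.integral_nonneg hpq.le (fun x _ => sq_nonneg _)
  have h1 : ∫ x in p..q, (f x - m) ^ 2
      = (∫ x in p..q, f x ^ 2) - 2 * m * (∫ x in p..q, f x) + m ^ 2 * (q - p) := by
    have : (fun x => (f x - m) ^ 2) = fun x => (f x ^ 2 - 2 * m * f x) + m ^ 2 := by
      funext x; ring
    rw [this, intervalIntegral.integral_add (hf2.sub (hf.const_mul _)) (by simp),
      intervalIntegral.integral_sub hf2 (hf.const_mul _),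
      intervalIntegral.integral_const_mul]
    simp; ring
  have hI : ∫ x in p..q, f x = m * (q - p) := by rw [hm]; field_simp
  rw [h1, hI] at h0
  rw [hI]
  nlinarith

lemma mean_aux (g g' g'' : ℝ → ℝ) (p q : ℝ) (hpq : p < q)
    (h1 : ∀ x, HasDerivAt g (g' x) x) (h2 : ∀ x, HasDerivAt g' (g'' x) x)
    (hc : Continuous g'') (e : ℝ) (he : e ∈ Set.Icc p q) :
    (g' e - (g q - g p) / (q - p)) ^ 2 ≤ (q - p) * ∫ x in p..q, g'' x ^ 2 := by
  obtain ⟨c, hcm, hcd⟩ := exists_hasDerivAt_eq_slope g g' hpq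
    (fun x _ => (h1 x).continuousAt.continuousWithinAt) (fun x _ => h1 x)
  rw [← hcd]
  have hftc : ∫ x in c..e, g'' x = g' e - g' c :=
    intervalIntegral.integral_eq_sub_of_hasDerivAt (fun x _ => h2 x) (hc.intervalIntegrable _ _)
  rw [← hftc]
  have hle : |∫ x in c..e, g'' x| ≤ ∫ x in p..q, |g'' x| := by
    have := intervalIntegral.norm_integral_le_integral_norm_uIoc (f := g'') (a := c) (b := e) (μ := volume)
    rw [Real.norm_eq_abs] at this
    refine this.trans ?_
    rw [intervalIntegral.integral_of_le hpq.le]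
    apply setIntegral_mono_set
    · exact (hc.norm.intervalIntegrable p q).1
    · exact Filter.Eventually.of_forall fun x => abs_nonneg _
    · apply LE.le.eventuallyLE
      apply Set.Ioc_subset_Ioc
      · exact le_min hcm.1.le he.1
      · exact max_le hcm.2.le he.2
  have := cs_aux (fun x => |g'' x|) p q hpq (hc.abs.intervalIntegrable _ _)
    ((hc.abs.pow 2).intervalIntegrable _ _)
  simp only [sq_abs] at this
  refine le_trans ?_ this
  rw [← sq_abs]
  exact pow_le_pow_left₀ (abs_nonneg _) hle 2

lemma interp_elem (Q : ℕ → ℝ) (N : ℕ) (f : ℝ → ℝ) (x : ℝ) (i : ℕ)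
    (hmono : ∀ i j : ℕ, 1 ≤ i → i < j → j ≤ N → Q i < Q j)
    (hi : 1 ≤ i) (hiN : i < N) (h1 : Q i ≤ x) (h2 : x ≤ Q (i + 1)) :
    interp Q N f x = f (Q i) * ((Q (i + 1) - x) / (Q (i + 1) - Q i))
      + f (Q (i + 1)) * ((x - Q i) / (Q (i + 1) - Q i)) := by
  have hle : ∀ i j : ℕ, 1 ≤ i → i ≤ j → j ≤ N → Q i ≤ Q j := by
    intro i j h1 h2 h3
    rcases h2.lt_or_eq with h | h
    · exact (hmono i j h1 h h3).le
    · rw [h]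
  have hd : 0 < Q (i + 1) - Q i := sub_pos.2 (hmono i (i+1) hi (by omega) (by omega))
  have hL : ∀ j, 1 ≤ j → j ≤ N → 0 < Q j - (if j = 1 then Q 1 - 1 else Q (j - 1)) := by
    intro j hj hjN
    split_ifs with h
    · subst h; norm_num
    · exact sub_pos.2 (hmono _ _ (by omega) (by omega) hjN)
  have hR : ∀ j, 1 ≤ j → j ≤ N → 0 < (if j = N then Q N + 1 else Q (j + 1)) - Q j := by
    intro j hj hjN
    split_ifs with h
    · subst h; norm_num
    · exact sub_pos.2 (hmono _ _ (by omega) (by omega) (by omega))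
  unfold interp
  have hsub : ({i, i+1} : Finset ℕ) ⊆ Finset.Icc 1 N := by
    intro j hj
    simp only [Finset.mem_insert, Finset.mem_singleton] at hj
    rw [Finset.mem_Icc]; omega
  rw [← Finset.sum_subset hsub]
  · rw [Finset.sum_pair (by omega)]
    congr 2
    · unfold hatFun
      have e1 : (1:ℝ) ≤ (x - (if i = 1 then Q 1 - 1 else Q (i - 1))) /
          (Q i - (if i = 1 then Q 1 - 1 else Q (i - 1))) := by
        rw [one_le_div (hL i hi hiN.le)]; linarith
      have hne : i ≠ N := by omega
      simp only [if_neg hne]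
      have e2 : (Q (i + 1) - x) / (Q (i + 1) - Q i) ≤ 1 := by
        rw [div_le_one hd]; linarith
      rw [min_eq_right (e2.trans e1), max_eq_right]
      exact div_nonneg (by linarith) hd.le
    · unfold hatFun
      have e1 : (1:ℝ) ≤ ((if i + 1 = N then Q N + 1 else Q (i + 1 + 1)) - x) /
          ((if i + 1 = N then Q N + 1 else Q (i + 1 + 1)) - Q (i + 1)) := by
        rw [one_le_div (hR (i+1) (by omega) hiN)]; linarith
      have hne : i + 1 ≠ 1 := by omega
      simp only [if_neg hne, Nat.add_sub_cancel]
      have e2 : (x - Q i) / (Q (i + 1) - Q i) ≤ 1 := by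
        rw [div_le_one hd]; linarith
      rw [min_eq_left (e2.trans e1), max_eq_right]
      exact div_nonneg (by linarith) hd.le
  · intro j hj hj2
    rw [Finset.mem_Icc] at hj
    simp only [Finset.mem_insert, Finset.mem_singleton, not_or] at hj2
    have : hatFun Q N j x = 0 := by
      unfold hatFun
      apply max_eq_left
      rcases lt_or_ge j i with h | h
      · apply (min_le_right _ _).trans
        apply div_nonpos_of_nonpos_of_nonneg _ (hR j hj.1 hj.2).le
        rw [if_neg (by omega)]
        have := hle (j+1) i (by omega) (by omega) (by omega)
        linarith
      · apply (min_le_left _ _).trans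
        apply div_nonpos_of_nonpos_of_nonneg _ (hL j hj.1 hj.2).le
        rw [if_neg (by omega)]
        have := hle (i+1) (j-1) (by omega) (by omega) (by omega)
        linarith
    rw [this, mul_zero]

lemma interp_cont (Q : ℕ → ℝ → ℝ) (N : ℕ) (f : ℝ → ℝ → ℝ) (x : ℝ) (s : Set ℝ)
    (hmono : ∀ t ∈ s, ∀ i j : ℕ, 1 ≤ i → i < j → j ≤ N → Q i t < Q j t)
    (hQ : ∀ i, Continuous (Q i)) (hf : Continuous (fun p : ℝ × ℝ => f p.1 p.2)) :
    ContinuousOn (fun t => interp (fun i => Q i t) N (fun y => f y t) x) s := by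
  unfold interp
  apply continuousOn_finsetSum
  intro i hi
  rw [Finset.mem_Icc] at hi
  apply ContinuousOn.mul
  · exact (hf.comp ((hQ i).prodMk continuous_id)).continuousOn
  · unfold hatFun
    apply ContinuousOn.sup continuousOn_const
    apply ContinuousOn.inf
    · split_ifs with h
      · subst h
        apply ContinuousOn.div
        · exact (continuous_const.sub ((hQ 1).sub continuous_const)).continuousOn
        · exact ((hQ 1).sub ((hQ 1).sub continuous_const)).continuousOn
        · intro t _; norm_num
      · apply ContinuousOn.div
        · exact (continuous_const.sub (hQ _)).continuousOn
        · exact ((hQ _).sub (hQ _)).continuousOn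
        · intro t ht
          exact (sub_pos.2 (hmono t ht _ _ (by omega) (by omega) hi.2)).ne'
    · split_ifs with h
      · subst h
        apply ContinuousOn.div
        · exact (((hQ _).add continuous_const).sub continuous_const).continuousOn
        · exact (((hQ _).add continuous_const).sub (hQ _)).continuousOn
        · intro t _; norm_num
      · apply ContinuousOn.div
        · exact ((hQ _).sub continuous_const).continuousOn
        · exact ((hQ _).sub (hQ _)).continuousOn
        · intro t ht
          exact (sub_pos.2 (hmono t ht _ _ (by omega) (by omega) (by omega))).ne'

lemma locate (q : ℕ → ℝ) (N : ℕ) (hN : 2 ≤ N) (x : ℝ) (h1 : q 1 ≤ x) (h2 : x ≤ q N) :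
    ∃ i, 1 ≤ i ∧ i < N ∧ q i ≤ x ∧ x ≤ q (i + 1) := by
  induction N, hN using Nat.le_induction with
  | base => exact ⟨1, le_rfl, by norm_num, h1, h2⟩
  | succ n hn ih =>
    rcases le_total x (q n) with h | h
    · obtain ⟨i, a, b, c⟩ := ih h
      exact ⟨i, a, by omega, c⟩
    · exact ⟨n, by omega, by omega, h, h2⟩

/-- Pieces of the remainder. -/
noncomputable def remPiece (P w : ℕ → ℝ) (t0 : ℝ) (φ φx : ℝ → ℝ → ℝ) (i : ℕ) (x t : ℝ) : ℝ :=
  (w i * ((P (i+1) + w (i+1) * (t - t0)) - x) *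
      (φx (P i + w i * (t - t0)) t
        - (φ (P (i+1) + w (i+1) * (t - t0)) t - φ (P i + w i * (t - t0)) t)
          / ((P (i+1) + w (i+1) * (t - t0)) - (P i + w i * (t - t0))))
    + w (i+1) * (x - (P i + w i * (t - t0))) *
      (φx (P (i+1) + w (i+1) * (t - t0)) t
        - (φ (P (i+1) + w (i+1) * (t - t0)) t - φ (P i + w i * (t - t0)) t)
          / ((P (i+1) + w (i+1) * (t - t0)) - (P i + w i * (t - t0)))))
    / ((P (i+1) + w (i+1) * (t - t0)) - (P i + w i * (t - t0)))

open Classical in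
/-- The remainder. -/
noncomputable def remTot (P w : ℕ → ℝ) (t0 : ℝ) (φ φx : ℝ → ℝ → ℝ) (N : ℕ) (x t : ℝ) : ℝ :=
  ∑ i ∈ Finset.Ico 1 N,
    if P i + w i * (t - t0) < x ∧ x < P (i+1) + w (i+1) * (t - t0)
      then remPiece P w t0 φ φx i x t else 0

lemma remTot_meas (P w : ℕ → ℝ) (t0 : ℝ) (φ φx : ℝ → ℝ → ℝ) (N : ℕ)
    (hφ : Continuous (fun p : ℝ × ℝ => φ p.1 p.2))
    (hφx : Continuous (fun p : ℝ × ℝ => φx p.1 p.2)) :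
    Measurable (fun p : ℝ × ℝ => remTot P w t0 φ φx N p.1 p.2) := by
  unfold remTot
  apply Finset.measurable_sum
  intro i _
  have hQ : ∀ i, Continuous (fun p : ℝ × ℝ => P i + w i * (p.2 - t0)) := by
    intro i; fun_prop
  have c1 : ∀ i, Continuous (fun p : ℝ × ℝ => φ (P i + w i * (p.2 - t0)) p.2) :=
    fun i => hφ.comp ((hQ i).prodMk continuous_snd)
  have c2 : ∀ i, Continuous (fun p : ℝ × ℝ => φx (P i + w i * (p.2 - t0)) p.2) :=
    fun i => hφx.comp ((hQ i).prodMk continuous_snd)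
  apply Measurable.ite
  · exact (measurableSet_lt (hQ i).measurable measurable_fst).inter
      (measurableSet_lt measurable_fst (hQ (i+1)).measurable)
  · unfold remPiece
    have m1 := fun i => (c1 i).measurable
    have m2 := fun i => (c2 i).measurable
    have m3 := fun i => (hQ i).measurable
    have md := ((m1 (i+1)).sub (m1 i)).div ((m3 (i+1)).sub (m3 i))
    exact ((((measurable_const.mul ((m3 (i+1)).sub measurable_fst)).mul ((m2 i).sub md)).add
      ((measurable_const.mul (measurable_fst.sub (m3 i))).mul ((m2 (i+1)).sub md))).div
        ((m3 (i+1)).sub (m3 i)))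
  · exact measurable_const

lemma remTot_eq (P w : ℕ → ℝ) (t0 : ℝ) (φ φx : ℝ → ℝ → ℝ) (N : ℕ) (x t : ℝ) (i : ℕ)
    (hmono : ∀ i j : ℕ, 1 ≤ i → i < j → j ≤ N →
      P i + w i * (t - t0) < P j + w j * (t - t0))
    (hi : 1 ≤ i) (hiN : i < N) (h1 : P i + w i * (t - t0) < x)
    (h2 : x < P (i+1) + w (i+1) * (t - t0)) :
    remTot P w t0 φ φx N x t = remPiece P w t0 φ φx i x t := by
  have hle : ∀ i j : ℕ, 1 ≤ i → i ≤ j → j ≤ N →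
      P i + w i * (t - t0) ≤ P j + w j * (t - t0) := by
    intro i j h1 h2 h3
    rcases h2.lt_or_eq with h | h
    · exact (hmono i j h1 h h3).le
    · rw [h]
  unfold remTot
  rw [Finset.sum_eq_single i]
  · rw [if_pos ⟨h1, h2⟩]
  · intro j hj hji
    rw [Finset.mem_Ico] at hj
    rw [if_neg]
    rintro ⟨h3, h4⟩
    rcases lt_or_gt_of_ne hji with h | h
    · have := hle (j+1) i (by omega) (by omega) (by omega)
      linarith
    · have := hle (i+1) j (by omega) (by omega) (by omega)
      linarith
  · intro h
    exact absurd (Finset.mem_Ico.2 ⟨hi, hiN⟩) h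

lemma remPiece_bound (W : ℝ) (P w : ℕ → ℝ) (t0 : ℝ) (φ φx φxx : ℝ → ℝ → ℝ) (x t : ℝ) (i : ℕ)
    (hφ : ∀ x, HasDerivAt (fun y => φ y t) (φx x t) x)
    (hφx : ∀ x, HasDerivAt (fun y => φx y t) (φxx x t) x)
    (hc : Continuous (fun y => φxx y t))
    (hw1 : |w i| ≤ W) (hw2 : |w (i+1)| ≤ W)
    (h1 : P i + w i * (t - t0) < x)
    (h2 : x < P (i+1) + w (i+1) * (t - t0)) :
    remPiece P w t0 φ φx i x t ^ 2 ≤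
      W ^ 2 * (((P (i+1) + w (i+1) * (t - t0)) - (P i + w i * (t - t0))) *
        ∫ y in (P i + w i * (t - t0))..(P (i+1) + w (i+1) * (t - t0)), φxx y t ^ 2) := by
  unfold remPiece
  set p := P i + w i * (t - t0)
  set q := P (i+1) + w (i+1) * (t - t0)
  have hpq : p < q := h1.trans h2
  have A := mean_aux (fun y => φ y t) (fun y => φx y t) (fun y => φxx y t) p q hpq hφ hφx hc
    p ⟨le_rfl, hpq.le⟩
  have B := mean_aux (fun y => φ y t) (fun y => φx y t) (fun y => φxx y t) p q hpq hφ hφx hc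
    q ⟨hpq.le, le_rfl⟩

  set α := φx p t - (φ q t - φ p t) / (q - p)
  set β := φx q t - (φ q t - φ p t) / (q - p)
  set E := (q - p) * ∫ y in p..q, φxx y t ^ 2
  have hd : 0 < q - p := sub_pos.2 hpq
  have hE : 0 ≤ E := (sq_nonneg _).trans A
  have hW : 0 ≤ W := (abs_nonneg _).trans hw1
  have hα : |α| ≤ √E := Real.abs_le_sqrt A
  have hβ : |β| ≤ √E := Real.abs_le_sqrt B
  have key : |w i * (q - x) * α + w (i+1) * (x - p) * β| ≤ W * √E * (q - p) := by
    calc _ ≤ |w i * (q - x) * α| + |w (i+1) * (x - p) * β| := abs_add_le _ _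
      _ = |w i| * (q - x) * |α| + |w (i+1)| * (x - p) * |β| := by
        rw [abs_mul, abs_mul, abs_mul, abs_mul, abs_of_pos (sub_pos.2 h1), abs_of_pos (sub_pos.2 h2)]
      _ ≤ W * (q - x) * √E + W * (x - p) * √E := by
        have := sub_pos.2 h1
        have := sub_pos.2 h2
        gcongr
      _ = _ := by ring
  rw [div_pow, div_le_iff₀ (by positivity), ← sq_abs]
  calc _ ≤ (W * √E * (q - p)) ^ 2 := pow_le_pow_left₀ (abs_nonneg _) key 2
    _ = W ^ 2 * (√E) ^ 2 * (q - p) ^ 2 := by ring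
    _ = _ := by rw [Real.sq_sqrt hE]

lemma interp_hasDeriv (P w : ℕ → ℝ) (t0 : ℝ) (φ φx φt : ℝ → ℝ → ℝ) (N : ℕ) (x t : ℝ) (i : ℕ)
    (hmono : ∀ᶠ t in nhds t, ∀ i j : ℕ, 1 ≤ i → i < j → j ≤ N →
      P i + w i * (t - t0) < P j + w j * (t - t0))
    (hφ : ∀ i, HasDerivAt (fun t => φ (P i + w i * (t - t0)) t)
      (φx (P i + w i * (t - t0)) t * w i + φt (P i + w i * (t - t0)) t) t)
    (hi : 1 ≤ i) (hiN : i < N) (h1 : P i + w i * (t - t0) < x)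
    (h2 : x < P (i+1) + w (i+1) * (t - t0)) :
    HasDerivAt (fun t => interp (fun i => P i + w i * (t - t0)) N (fun y => φ y t) x)
      (interp (fun i => P i + w i * (t - t0)) N (fun y => φt y t) x
        + remTot P w t0 φ φx N x t) t := by
  have hQd : ∀ i, HasDerivAt (fun t => P i + w i * (t - t0)) (w i) t := by
    intro i
    simpa using (((hasDerivAt_id t).sub_const t0).const_mul (w i)).const_add (P i)
  rw [remTot_eq P w t0 φ φx N x t i hmono.self_of_nhds hi hiN h1 h2,
    interp_elem _ N _ x i hmono.self_of_nhds hi hiN h1.le h2.le]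
  have ev : (fun t => interp (fun i => P i + w i * (t - t0)) N (fun y => φ y t) x) =ᶠ[nhds t]
      fun t => φ (P i + w i * (t - t0)) t * (((P (i+1) + w (i+1) * (t - t0)) - x) /
          ((P (i+1) + w (i+1) * (t - t0)) - (P i + w i * (t - t0))))
        + φ (P (i+1) + w (i+1) * (t - t0)) t * ((x - (P i + w i * (t - t0))) /
          ((P (i+1) + w (i+1) * (t - t0)) - (P i + w i * (t - t0)))) := by
    filter_upwards [hmono, (hQd i).continuousAt.eventually_lt_const h1,
      (hQd (i+1)).continuousAt.eventually_const_lt h2] with s hs h3 h4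
    exact interp_elem _ N _ x i hs hi hiN h3.le h4.le
  have hne : (P (i+1) + w (i+1) * (t - t0)) - (P i + w i * (t - t0)) ≠ 0 := by linarith
  refine HasDerivAt.congr_of_eventuallyEq ?_ ev
  have D := ((hφ i).mul (((hQd (i+1)).sub_const x).div ((hQd (i+1)).sub (hQd i)) hne)).add
    ((hφ (i+1)).mul (((hQd i).const_sub x).div ((hQd (i+1)).sub (hQd i)) hne))
  refine D.congr_deriv ?_
  unfold remPiece
  simp only [Pi.sub_apply, Pi.div_apply]
  set p := P i + w i * (t - t0)
  set q := P (i+1) + w (i+1) * (t - t0)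
  field_simp
  ring

lemma main_bound (W : ℝ) (hW : 0 ≤ W) (a b t0 T h : ℝ) (N : ℕ) (P w : ℕ → ℝ)
    (φ φx φt φxx : ℝ → ℝ → ℝ) (hab : a < b) (hT : t0 < T) (hN : 2 ≤ N) (hh : 0 < h)
    (hQ1 : ∀ t, P 1 + w 1 * (t - t0) = a) (hQN : ∀ t, P N + w N * (t - t0) = b)
    (hmono : ∀ t ∈ Set.Icc t0 T, ∀ i j : ℕ, 1 ≤ i → i < j → j ≤ N →
          P i + w i * (t - t0) < P j + w j * (t - t0))
    (hsz : ∀ t ∈ Set.Icc t0 T, ∀ i : ℕ, 1 ≤ i → i < N →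
          (P (i + 1) + w (i + 1) * (t - t0)) - (P i + w i * (t - t0)) ≤ h)
    (hw : ∀ i : ℕ, 1 ≤ i → i ≤ N → |w i| ≤ W)
    (c0 : Continuous (fun p : ℝ × ℝ => φ p.1 p.2))
    (cx : Continuous (fun p : ℝ × ℝ => φx p.1 p.2))
    (ct : Continuous (fun p : ℝ × ℝ => φt p.1 p.2))
    (cxx : Continuous (fun p : ℝ × ℝ => φxx p.1 p.2))
    (dx : ∀ x t, HasDerivAt (fun y => φ y t) (φx x t) x)
    (dxx : ∀ x t, HasDerivAt (fun y => φx y t) (φxx x t) x)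
    (dtot : ∀ i t, HasDerivAt (fun t => φ (P i + w i * (t - t0)) t)
      (φx (P i + w i * (t - t0)) t * w i + φt (P i + w i * (t - t0)) t) t) :
    (∫ x in a..b, ((interp (fun i => P i + w i * (T - t0)) N (fun y => φ y T) x
        - interp (fun i => P i + w i * (t0 - t0)) N (fun y => φ y t0) x)
      - ∫ t in t0..T, interp (fun i => P i + w i * (t - t0)) N (fun y => φt y t) x) ^ 2)
      ≤ (T - t0) * (W ^ 2 * h ^ 2 * ∫ t in t0..T, ∫ x in a..b, φxx x t ^ 2) := by
  set R := remTot P w t0 φ φx N with hR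
  have mR : Measurable (fun p : ℝ × ℝ => R p.1 p.2) := remTot_meas P w t0 φ φx N c0 cx
  have mRx : ∀ x, Measurable (fun t => R x t) := fun x => mR.comp measurable_prodMk_left
  have mRt : ∀ t, Measurable (fun x => R x t) := fun x => mR.comp measurable_prodMk_right
  have cxt : ∀ t, Continuous (fun y => φxx y t) := fun t =>
    cxx.comp (continuous_id.prodMk continuous_const)
  have cQ : ∀ i, Continuous (fun t => P i + w i * (t - t0)) := by intro i; fun_prop
  have hle : ∀ t ∈ Set.Icc t0 T, ∀ i j : ℕ, 1 ≤ i → i ≤ j → j ≤ N →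
      P i + w i * (t - t0) ≤ P j + w j * (t - t0) := by
    intro t ht i j h1 h2 h3
    rcases h2.lt_or_eq with h | h
    · exact (hmono t ht i j h1 h h3).le
    · rw [h]
  -- the spatial energy
  set F : ℝ → ℝ := fun t => ∫ x in a..b, φxx x t ^ 2 with hF
  have cF : Continuous F := by
    apply intervalIntegral.continuous_parametric_intervalIntegral_of_continuous'
    exact (cxx.comp continuous_swap).pow 2
  -- elementwise bound
  have hel : ∀ t ∈ Set.Icc t0 T, ∀ i, 1 ≤ i → i < N → ∀ x,
      P i + w i * (t - t0) < x → x < P (i+1) + w (i+1) * (t - t0) →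
      R x t ^ 2 ≤ W ^ 2 * (h *
        ∫ y in (P i + w i * (t - t0))..(P (i+1) + w (i+1) * (t - t0)), φxx y t ^ 2) := by
    intro t ht i hi hiN x h1 h2
    rw [hR, remTot_eq P w t0 φ φx N x t i (hmono t ht) hi hiN h1 h2]
    refine (remPiece_bound W P w t0 φ φx φxx x t i (fun x => dx x t) (fun x => dxx x t) (cxt t)
      (hw i hi hiN.le) (hw (i+1) (by omega) hiN) h1 h2).trans ?_
    have := hsz t ht i hi hiN
    have : 0 ≤ ∫ y in (P i + w i * (t - t0))..(P (i+1) + w (i+1) * (t - t0)), φxx y t ^ 2 :=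
      intervalIntegral.integral_nonneg (h1.trans h2).le (fun _ _ => sq_nonneg _)
    gcongr
  -- global bound
  have hgl : ∀ t ∈ Set.Icc t0 T, ∀ x, R x t ^ 2 ≤ W ^ 2 * (h * F t) := by
    intro t ht x
    have hF0 : 0 ≤ F t := intervalIntegral.integral_nonneg hab.le (fun _ _ => sq_nonneg _)
    by_cases hx : ∃ i, 1 ≤ i ∧ i < N ∧ P i + w i * (t - t0) < x ∧ x < P (i+1) + w (i+1) * (t - t0)
    · obtain ⟨i, hi, hiN, h1, h2⟩ := hx
      refine (hel t ht i hi hiN x h1 h2).trans ?_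
      have : ∫ y in (P i + w i * (t - t0))..(P (i+1) + w (i+1) * (t - t0)), φxx y t ^ 2 ≤ F t := by
        apply intervalIntegral.integral_mono_interval
        · rw [← hQ1 t]; exact hle t ht 1 i le_rfl hi hiN.le
        · exact (h1.trans h2).le
        · rw [← hQN t]; exact hle t ht (i+1) N (by omega) hiN le_rfl
        · exact Filter.Eventually.of_forall fun _ => sq_nonneg _
        · exact ((cxt t).pow 2).intervalIntegrable _ _
      gcongr
    · have : R x t = 0 := by
        rw [hR]; unfold remTot
        apply Finset.sum_eq_zero
        intro i hi
        rw [Finset.mem_Ico] at hi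
        rw [if_neg]
        intro h
        exact hx ⟨i, hi.1, hi.2, h.1, h.2⟩
      rw [this, zero_pow two_ne_zero]; positivity
  obtain ⟨S, hS⟩ := (isCompact_Icc (a := t0) (b := T)).exists_bound_of_continuousOn cF.continuousOn
  set M := W ^ 2 * (h * S) with hM
  have hbd : ∀ t ∈ Set.Icc t0 T, ∀ x, R x t ^ 2 ≤ M := by
    intro t ht x
    refine (hgl t ht x).trans ?_
    have := (le_abs_self _).trans (hS t ht)
    rw [hM]
    gcongr
  have hbd1 : ∀ t ∈ Set.Icc t0 T, ∀ x, |R x t| ≤ √M := fun t ht x =>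
    Real.abs_le_sqrt (hbd t ht x)
  have iRt : ∀ x, IntervalIntegrable (fun t => R x t) volume t0 T := by
    intro x
    rw [intervalIntegrable_iff_integrableOn_Ioc_of_le hT.le]
    apply Measure.integrableOn_of_bounded (M := √M) (by simp) (mRx x).aestronglyMeasurable
    filter_upwards [ae_restrict_mem measurableSet_Ioc] with t ht
    exact hbd1 t (Set.Ioc_subset_Icc_self ht) x
  have iRt2 : ∀ x, IntervalIntegrable (fun t => R x t ^ 2) volume t0 T := by
    intro x
    rw [intervalIntegrable_iff_integrableOn_Ioc_of_le hT.le]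
    apply Measure.integrableOn_of_bounded (M := M) (by simp) ((mRx x).pow_const 2).aestronglyMeasurable
    filter_upwards [ae_restrict_mem measurableSet_Ioc] with t ht
    rw [Real.norm_eq_abs, abs_of_nonneg (sq_nonneg _)]
    exact hbd t (Set.Ioc_subset_Icc_self ht) x
  have iRx2 : ∀ t ∈ Set.Icc t0 T, ∀ p q, IntervalIntegrable (fun x => R x t ^ 2) volume p q := by
    intro t ht p q
    rw [intervalIntegrable_iff]
    apply Measure.integrableOn_of_bounded (M := M) (by simp) ((mRt t).pow_const 2).aestronglyMeasurable
    refine Filter.Eventually.of_forall fun x => ?_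
    rw [Real.norm_eq_abs, abs_of_nonneg (sq_nonneg _)]
    exact hbd t ht x
  have iprod : Integrable (Function.uncurry fun x t => R x t ^ 2)
      ((volume.restrict (Set.Ioc a b)).prod (volume.restrict (Set.Ioc t0 T))) := by
    rw [Measure.prod_restrict]
    apply Measure.integrableOn_of_bounded (M := M)
    · rw [Measure.prod_prod]; simp [ENNReal.mul_eq_top]
    · exact (mR.pow_const 2).aestronglyMeasurable
    · filter_upwards [ae_restrict_mem (measurableSet_Ioc.prod measurableSet_Ioc)] with p hp
      simp only [Function.uncurry]
      rw [Real.norm_eq_abs, abs_of_nonneg (sq_nonneg _)]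
      exact hbd p.2 (Set.Ioc_subset_Icc_self hp.2) p.1
  -- FTC in time
  have hftc : ∀ x ∈ Set.Ioc a b, (∀ i, x ≠ P i) →
      (interp (fun i => P i + w i * (T - t0)) N (fun y => φ y T) x
        - interp (fun i => P i + w i * (t0 - t0)) N (fun y => φ y t0) x)
      - ∫ t in t0..T, interp (fun i => P i + w i * (t - t0)) N (fun y => φt y t) x
      = ∫ t in t0..T, R x t := by
    intro x hx hxP
    have c1 := interp_cont (fun i t => P i + w i * (t - t0)) N φ x (Set.Icc t0 T) hmono cQ c0
    have c2 := interp_cont (fun i t => P i + w i * (t - t0)) N φt x (Set.Icc t0 T) hmono cQ ct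
    have i2 : IntervalIntegrable
        (fun t => interp (fun i => P i + w i * (t - t0)) N (fun y => φt y t) x) volume t0 T :=
      ContinuousOn.intervalIntegrable_of_Icc hT.le c2
    have hcount : (⋃ i : ℕ, {t | P i + w i * (t - t0) = x}).Countable := by
      apply Set.countable_iUnion
      intro i
      apply Set.Subsingleton.countable
      intro s hs t ht
      simp only [Set.mem_ofPred_eq] at hs ht
      have hwi : w i ≠ 0 := by
        intro h0
        rw [h0] at hs
        exact hxP i (by linarith)
      have : w i * (s - t) = 0 := by linarith
      rcases mul_eq_zero.1 this with h | h
      · exact absurd h hwi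
      · linarith
    have := integral_eq_of_hasDerivAt_off_countable_of_le
      (fun t => interp (fun i => P i + w i * (t - t0)) N (fun y => φ y t) x)
      (fun t => interp (fun i => P i + w i * (t - t0)) N (fun y => φt y t) x + R x t)
      hT.le hcount c1 ?_ (i2.add (iRt x))
    · rw [← this, intervalIntegral.integral_add i2 (iRt x)]; ring
    · rintro t ⟨ht, htc⟩
      simp only [Set.mem_iUnion, Set.mem_ofPred_eq, not_exists] at htc
      obtain ⟨i, hi, hiN, h1, h2⟩ := locate (fun i => P i + w i * (t - t0)) N hN x
        (by simp only [hQ1 t]; exact hx.1.le) (by simp only [hQN t]; exact hx.2)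
      refine interp_hasDeriv P w t0 φ φx φt N x t i ?_ (fun i => dtot i t) hi hiN
        (lt_of_le_of_ne h1 (htc i)) (lt_of_le_of_ne h2 (Ne.symm (htc (i+1))))
      filter_upwards [Icc_mem_nhds ht.1 ht.2] with s hs using hmono s hs
  -- spatial sum
  have hspace : ∀ t ∈ Set.Icc t0 T, ∫ x in a..b, R x t ^ 2 ≤ W ^ 2 * h ^ 2 * F t := by
    intro t ht
    set q : ℕ → ℝ := fun i => P i + w i * (t - t0) with hq
    have e1 : ∫ x in a..b, R x t ^ 2 = ∑ i ∈ Finset.Ico 1 N, ∫ x in q i..q (i+1), R x t ^ 2 := by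
      rw [intervalIntegral.sum_integral_adjacent_intervals_Ico (by omega)
        (fun i _ => iRx2 t ht _ _)]
      simp only [hq, hQ1 t, hQN t]
    have e2 : F t = ∑ i ∈ Finset.Ico 1 N, ∫ x in q i..q (i+1), φxx x t ^ 2 := by
      rw [intervalIntegral.sum_integral_adjacent_intervals_Ico (by omega)
        (f := fun x => φxx x t ^ 2) (fun i _ => ((cxt t).pow 2).intervalIntegrable _ _)]
      simp only [hq, hQ1 t, hQN t, hF]
    rw [e1, e2, Finset.mul_sum]
    apply Finset.sum_le_sum
    intro i hi
    rw [Finset.mem_Ico] at hi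
    have hlt : q i < q (i+1) := hmono t ht i (i+1) hi.1 (by omega) (by omega)
    have hs : q (i+1) - q i ≤ h := hsz t ht i hi.1 hi.2
    have h0 : 0 ≤ ∫ x in q i..q (i+1), φxx x t ^ 2 :=
      intervalIntegral.integral_nonneg hlt.le (fun _ _ => sq_nonneg _)
    calc ∫ x in q i..q (i+1), R x t ^ 2
        ≤ ∫ x in q i..q (i+1), W ^ 2 * (h * ∫ y in q i..q (i+1), φxx y t ^ 2) := by
          apply intervalIntegral.integral_mono_on_of_le_Ioo hlt.le (iRx2 t ht _ _) (by simp)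
          intro x hx
          exact hel t ht i hi.1 hi.2 x hx.1 hx.2
      _ = (q (i+1) - q i) * (W ^ 2 * (h * ∫ y in q i..q (i+1), φxx y t ^ 2)) := by
          rw [intervalIntegral.integral_const, smul_eq_mul]
      _ ≤ h * (W ^ 2 * (h * ∫ y in q i..q (i+1), φxx y t ^ 2)) := by gcongr
      _ = _ := by ring
  -- assemble
  have hae : ∀ᵐ x ∂(volume.restrict (Set.Ioc a b)), ∀ i, x ≠ P i := by
    rw [ae_all_iff]
    intro i
    apply ae_restrict_of_ae
    exact Measure.ae_ne volume (P i)
  have hTd : 0 ≤ T - t0 := by linarith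
  rw [intervalIntegral.integral_of_le hab.le]
  calc _ ≤ ∫ x in Set.Ioc a b, (T - t0) * ∫ t in Set.Ioc t0 T, R x t ^ 2 := by
        apply integral_mono_of_nonneg
        · exact Filter.Eventually.of_forall fun _ => sq_nonneg _
        · exact iprod.integral_prod_left.const_mul _
        · filter_upwards [hae, ae_restrict_mem measurableSet_Ioc] with x hx hxm
          rw [hftc x hxm hx, ← intervalIntegral.integral_of_le hT.le]
          exact cs_aux _ _ _ hT (iRt x) (iRt2 x)
    _ = (T - t0) * ∫ t in Set.Ioc t0 T, ∫ x in Set.Ioc a b, R x t ^ 2 := by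
        rw [integral_const_mul, integral_integral_swap iprod]
    _ ≤ (T - t0) * ∫ t in Set.Ioc t0 T, W ^ 2 * h ^ 2 * F t := by
        apply mul_le_mul_of_nonneg_left _ hTd
        apply setIntegral_mono_on
        · exact iprod.integral_prod_right
        · exact (continuous_const.mul cF).integrableOn_Ioc
        · exact measurableSet_Ioc
        · intro t ht
          rw [← intervalIntegral.integral_of_le hab.le]
          exact hspace t (Set.Ioc_subset_Icc_self ht)
    _ = _ := by
        rw [integral_const_mul, ← intervalIntegral.integral_of_le hT.le]

/-- **L² estimate for the time difference of the moving interpolation operator.**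
The nodes move affinely, `Pᵢ(t) = Pᵢ + wᵢ (t − t₀)`, with velocities bounded by `W`;
`h` bounds the element sizes at both time levels.  Then the difference quotient of the
moving interpolant deviates from the time average of the interpolated time derivative
by at most `C h/√Δt` times the `L²L²` norm of `∂ₓ²φ`, with `C = C(W)`. -/
theorem moving_interpolation_time_difference_L2
    (W : ℝ) (hW : 0 ≤ W) :
    ∃ C : ℝ, 0 < C ∧
      ∀ (a b t0 Δt h : ℝ) (N : ℕ) (P w : ℕ → ℝ) (φ : ℝ → ℝ → ℝ),
        a < b → 0 < Δt → 0 < h → 2 ≤ N →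
        P 1 = a → P N = b →
        P 1 + w 1 * Δt = a → P N + w N * Δt = b →
        (∀ t ∈ Set.Icc t0 (t0 + Δt), ∀ i j : ℕ, 1 ≤ i → i < j → j ≤ N →
          P i + w i * (t - t0) < P j + w j * (t - t0)) →
        (∀ i : ℕ, 1 ≤ i → i < N →
          P (i + 1) - P i ≤ h ∧ (P (i + 1) + w (i + 1) * Δt) - (P i + w i * Δt) ≤ h) →
        (∀ i : ℕ, 1 ≤ i → i ≤ N → |w i| ≤ W) →
        ContDiff ℝ 2 (fun p : ℝ × ℝ => φ p.1 p.2) →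
        Real.sqrt (∫ x in a..b,
            ((interp (fun i => P i + w i * Δt) N (fun y => φ y (t0 + Δt)) x
                - interp P N (fun y => φ y t0) x) / Δt
              - (1 / Δt) * ∫ t in t0..(t0 + Δt),
                  interp (fun i => P i + w i * (t - t0)) N
                    (fun y => deriv (fun s => φ y s) t) x) ^ 2)
          ≤ C * h / Real.sqrt Δt *
            Real.sqrt (∫ t in t0..(t0 + Δt), ∫ x in a..b,
              (deriv (fun y => deriv (fun z => φ z t) y) x) ^ 2) := by

  refine ⟨W + 1, by linarith, ?_⟩
  intro a b t0 Δt h N P w φ hab hΔ hh hN hP1 hPN hP1' hPN' hmono hsz hw hφ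
  set Φ : ℝ × ℝ → ℝ := fun p => φ p.1 p.2 with hΦ
  have dΦ : Differentiable ℝ Φ := hφ.differentiable (by norm_num)
  have cD : ContDiff ℝ 1 (fderiv ℝ Φ) := hφ.fderiv_right (by norm_num)
  set φx : ℝ → ℝ → ℝ := fun x t => fderiv ℝ Φ (x, t) (1, 0) with hφx
  set φt : ℝ → ℝ → ℝ := fun x t => fderiv ℝ Φ (x, t) (0, 1) with hφt
  set Ψ : ℝ × ℝ → ℝ := fun p => fderiv ℝ Φ p (1, 0) with hΨ
  have cΨ : ContDiff ℝ 1 Ψ := cD.clm_apply contDiff_const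
  have dΨ : Differentiable ℝ Ψ := cΨ.differentiable (by norm_num)
  set φxx : ℝ → ℝ → ℝ := fun x t => fderiv ℝ Ψ (x, t) (1, 0) with hφxx
  have cx : Continuous (fun p : ℝ × ℝ => φx p.1 p.2) := cΨ.continuous
  have ct : Continuous (fun p : ℝ × ℝ => φt p.1 p.2) :=
    (cD.clm_apply (contDiff_const (c := ((0:ℝ), (1:ℝ))))).continuous
  have cxx : Continuous (fun p : ℝ × ℝ => φxx p.1 p.2) :=
    (cΨ.continuous_fderiv (by norm_num)).clm_apply continuous_const
  have dx : ∀ x t, HasDerivAt (fun y => φ y t) (φx x t) x := fun x t =>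
    HasFDerivAt.comp_hasDerivAt (l := Φ) (f := fun y => (y, t)) x (dΦ (x, t)).hasFDerivAt
      ((hasDerivAt_id x).prodMk (hasDerivAt_const x t))
  have dt : ∀ x t, HasDerivAt (fun s => φ x s) (φt x t) t := fun x t =>
    (dΦ (x, t)).hasFDerivAt.comp_hasDerivAt t ((hasDerivAt_const t x).prodMk (hasDerivAt_id t))
  have dxx : ∀ x t, HasDerivAt (fun y => φx y t) (φxx x t) x := fun x t =>
    HasFDerivAt.comp_hasDerivAt (l := Ψ) (f := fun y => (y, t)) x (dΨ (x, t)).hasFDerivAt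
      ((hasDerivAt_id x).prodMk (hasDerivAt_const x t))
  have dtot : ∀ i t, HasDerivAt (fun t => φ (P i + w i * (t - t0)) t)
      (φx (P i + w i * (t - t0)) t * w i + φt (P i + w i * (t - t0)) t) t := by
    intro i t
    have hQd : HasDerivAt (fun t => P i + w i * (t - t0)) (w i) t := by
      simpa using (((hasDerivAt_id t).sub_const t0).const_mul (w i)).const_add (P i)
    have := HasFDerivAt.comp_hasDerivAt (l := Φ) (f := fun t => (P i + w i * (t - t0), t)) t
      (dΦ (P i + w i * (t - t0), t)).hasFDerivAt
      (hQd.prodMk (hasDerivAt_id t))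
    refine this.congr_deriv ?_
    have e : ((w i, 1) : ℝ × ℝ) = w i • ((1:ℝ), (0:ℝ)) + ((0:ℝ), (1:ℝ)) := by simp
    rw [e, map_add, map_smul, smul_eq_mul, mul_comm]
  have e1 : ∀ t, (fun y => deriv (fun s => φ y s) t) = fun y => φt y t := fun t =>
    funext fun y => (dt y t).deriv
  have e2 : ∀ t x, deriv (fun y => deriv (fun z => φ z t) y) x = φxx x t := by
    intro t x
    have : (fun y => deriv (fun z => φ z t) y) = fun y => φx y t := funext fun y => (dx y t).deriv
    rw [this]; exact (dxx x t).deriv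
  simp only [e1, e2]
  have w1 : w 1 = 0 := by
    have : w 1 * Δt = 0 := by linarith
    exact (mul_eq_zero.1 this).resolve_right hΔ.ne'
  have wN : w N = 0 := by
    have : w N * Δt = 0 := by linarith
    exact (mul_eq_zero.1 this).resolve_right hΔ.ne'
  have hsz' : ∀ t ∈ Set.Icc t0 (t0 + Δt), ∀ i : ℕ, 1 ≤ i → i < N →
      (P (i + 1) + w (i + 1) * (t - t0)) - (P i + w i * (t - t0)) ≤ h := by
    intro t ht i hi hiN
    obtain ⟨h1, h2⟩ := hsz i hi hiN
    have ht0 : 0 ≤ t - t0 := by linarith [ht.1]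
    have ht1 : t - t0 ≤ Δt := by linarith [ht.2]
    rcases le_total 0 (w (i+1) - w i) with hs | hs
    · nlinarith [mul_le_mul_of_nonneg_left ht1 hs]
    · nlinarith [mul_nonneg_of_nonpos_of_nonpos hs (neg_nonpos.2 ht0)]
  have key := main_bound W hW a b t0 (t0 + Δt) h N P w φ φx φt φxx hab (by linarith) hN hh
    (by intro t; rw [w1, hP1]; ring) (by intro t; rw [wN, hPN]; ring) hmono hsz' hw
    hφ.continuous cx ct cxx dx dxx dtot
  have q0 : (fun i => P i + w i * (t0 - t0)) = P := by funext i; ring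
  simp only [add_sub_cancel_left, q0] at key
  set I := ∫ t in t0..(t0 + Δt), ∫ x in a..b, φxx x t ^ 2 with hI
  have hI0 : 0 ≤ I := intervalIntegral.integral_nonneg (by linarith) fun t _ =>
    intervalIntegral.integral_nonneg hab.le fun _ _ => sq_nonneg _
  rw [Real.sqrt_le_left (by positivity)]
  have e3 : ∀ A B : ℝ, (A / Δt - 1 / Δt * B) ^ 2 = (1 / Δt ^ 2) * (A - B) ^ 2 := by
    intro A B; field_simp
  simp only [e3]
  rw [intervalIntegral.integral_const_mul, mul_pow, div_pow, Real.sq_sqrt hΔ.le, Real.sq_sqrt hI0]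
  refine (mul_le_mul_of_nonneg_left key (by positivity)).trans ?_
  have e4 : 1 / Δt ^ 2 * (Δt * (W ^ 2 * h ^ 2 * I)) = (W * h) ^ 2 / Δt * I := by
    field_simp
  rw [e4]
  gcongr
  linarith
end

section
/- Let W≥0 and h>0 with h ≥ max_i max(P_{i+1}^{n−1}−P_i^{n−1}, P_{i+1}ⁿ−P_iⁿ), and assume |w_i| ≤ W for all i∈{1,…,N_p}. Define η(t)(x) := φ(x,t) − (Π_h(t)φ(·,t))(x), ηⁿ := η(tⁿ), ηⁿ⁻¹ := η(t^{n−1}). Then there exists a constant C>0 depending only on W (independent of Δt, h, the nodes, N_p, and φ) such that for every φ:[a,b]×[t^{n−1},tⁿ]→ℝ whose partial derivatives ∂_t^j∂_x^kφ exist and are continuous for all j≤1, k≤2: (1/Δt)·( ∫_a^b (ηⁿ(x)−ηⁿ⁻¹(x))² dx )^{1/2} ≤ (C·h/√Δt) · ( Σ_{j=0}^{1} Σ_{k=0}^{2} ∫_{t^{n−1}}^{tⁿ} ∫_a^b (∂_t^j∂_x^kφ(x,t))² dx dt )^{1/2}. -/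
open MeasureTheory

/-- Partial derivative in the first (spatial) variable. -/
noncomputable def pdx (F : ℝ → ℝ → ℝ) : ℝ → ℝ → ℝ := fun x t => deriv (fun y => F y t) x

/-- Partial derivative in the second (temporal) variable. -/
noncomputable def pdt (F : ℝ → ℝ → ℝ) : ℝ → ℝ → ℝ := fun x t => deriv (fun s => F x s) t


/-- Cauchy-Schwarz on an interval with a dominating function. -/
lemma aux_cs {a b : ℝ} (hab : a < b) {f g : ℝ → ℝ}
    (hf : IntervalIntegrable f volume a b) (hg : IntervalIntegrable g volume a b)
    (hfg : ∀ᵐ x ∂(volume.restrict (Set.Icc a b)), f x ^ 2 ≤ g x) :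
    (∫ x in a..b, f x) ^ 2 ≤ (b - a) * ∫ x in a..b, g x := by
  have hba : 0 < b - a := sub_pos.2 hab
  set I := ∫ x in a..b, f x with hI
  set c := I / (b - a) with hc
  have h1 : ∫ x in a..b, (2 * c * f x - c ^ 2) ≤ ∫ x in a..b, g x := by
    apply intervalIntegral.integral_mono_ae_restrict hab.le
      ((hf.const_mul _).sub intervalIntegrable_const) hg
    filter_upwards [hfg] with x hx
    nlinarith [sq_nonneg (f x - c)]
  rw [intervalIntegral.integral_sub (hf.const_mul _) intervalIntegrable_const,
    intervalIntegral.integral_const_mul, intervalIntegral.integral_const, smul_eq_mul, ← hI] at h1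
  have h2 : I = c * (b - a) := by rw [hc]; field_simp
  rw [h2] at h1 ⊢
  nlinarith

/-- bound for increments -/
lemma aux_abs_int {A B u v : ℝ} {f : ℝ → ℝ} (hf : Continuous f)
    (hu : u ∈ Set.Icc A B) (hv : v ∈ Set.Icc A B) :
    |∫ x in u..v, f x| ≤ ∫ x in A..B, |f x| := by
  have hAB : A ≤ B := hu.1.trans hu.2
  have key : ∀ u v : ℝ, A ≤ u → u ≤ v → v ≤ B → |∫ x in u..v, f x| ≤ ∫ x in A..B, |f x| := by
    intro u v h1 h2 h3
    refine (intervalIntegral.abs_integral_le_integral_abs h2).trans ?_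
    exact intervalIntegral.integral_mono_interval h1 h2 h3
      (Filter.Eventually.of_forall fun x => abs_nonneg _) (hf.abs.intervalIntegrable _ _)
  rcases le_total u v with h | h
  · exact key u v hu.1 h hv.2
  · rw [intervalIntegral.integral_symm, abs_neg]
    exact key v u hv.1 h hu.2

/-- differentiating the increment `F y t - F x t` in time. -/
lemma aux_dt_incr {F : ℝ → ℝ → ℝ} 
    (hx : ∀ t, Differentiable ℝ fun x => F x t)
    (ht : ∀ x, Differentiable ℝ fun t => F x t)
    (hxt : ∀ x, Differentiable ℝ fun t => pdx F x t)
    (cx : Continuous fun p : ℝ × ℝ => pdx F p.1 p.2)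
    (cxt : Continuous fun p : ℝ × ℝ => pdt (pdx F) p.1 p.2) (u v t : ℝ) :
    pdt F v t - pdt F u t = ∫ ξ in u..v, pdt (pdx F) ξ t := by
  have e1 : ∀ s, ∫ ξ in u..v, pdx F ξ s = F v s - F u s := by
    intro s
    apply intervalIntegral.integral_eq_sub_of_hasDerivAt
    · intro x _
      exact (hx s x).hasDerivAt
    · exact (cx.comp (by fun_prop : Continuous fun x : ℝ => (x, s))).intervalIntegrable _ _
  have hd1 : HasDerivAt (fun s => F v s - F u s) (pdt F v t - pdt F u t) t :=
    ((ht v t).hasDerivAt).sub ((ht u t).hasDerivAt)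
  obtain ⟨M, hM⟩ := ((isCompact_uIcc (a := u) (b := v)).prod
    (isCompact_Icc (a := t - 1) (b := t + 1))).exists_bound_of_continuousOn cxt.continuousOn
  have hd2 := (intervalIntegral.hasDerivAt_integral_of_dominated_loc_of_deriv_le
    (μ := volume) (a := u) (b := v) (F := fun s ξ => pdx F ξ s)
    (F' := fun s ξ => pdt (pdx F) ξ s) (x₀ := t) (s := Set.Icc (t - 1) (t + 1))
    (bound := fun _ => M)
    (Icc_mem_nhds (by linarith) (by linarith))
    (Filter.Eventually.of_forall fun s =>
      (cx.comp (by fun_prop : Continuous fun x : ℝ => (x, s))).aestronglyMeasurable)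
    ((cx.comp (by fun_prop : Continuous fun x : ℝ => (x, t))).intervalIntegrable _ _)
    ((cxt.comp (by fun_prop : Continuous fun x : ℝ => (x, t))).aestronglyMeasurable)
    (Filter.Eventually.of_forall fun ξ hξ s hs =>
      hM (ξ, s) ⟨Set.uIoc_subset_uIcc hξ, hs⟩)
    intervalIntegrable_const
    (Filter.Eventually.of_forall fun ξ hξ s hs => (hxt ξ s).hasDerivAt)).2
  simp only [e1] at hd2
  exact hd1.unique hd2

/-- chain rule along a moving node -/
lemma aux_chain {F : ℝ → ℝ → ℝ} 
    (hx : ∀ t, Differentiable ℝ fun x => F x t)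
    (ht : ∀ x, Differentiable ℝ fun t => F x t)
    (cx : Continuous fun p : ℝ × ℝ => pdx F p.1 p.2)
    (ct : Continuous fun p : ℝ × ℝ => pdt F p.1 p.2) {q : ℝ → ℝ} {w t : ℝ}
    (hq : HasDerivAt q w t) :
    HasDerivAt (fun s => F (q s) s) (w * pdx F (q t) t + pdt F (q t) t) t := by
  have h := hasStrictFDerivAt_uncurry_coprod (𝕜 := ℝ) (u := (q t, t)) (f := F)
    (f₁ := fun x s => (ContinuousLinearMap.toSpanSingleton ℝ (pdx F x s)))
    (f₂ := fun x s => (ContinuousLinearMap.toSpanSingleton ℝ (pdt F x s)))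
    (Filter.Eventually.of_forall fun v => ((hx v.2 v.1).hasDerivAt).hasFDerivAt)
    (Filter.Eventually.of_forall fun v => ((ht v.1 v.2).hasDerivAt).hasFDerivAt)
    (by
      have : Continuous (fun p : ℝ × ℝ => ContinuousLinearMap.toSpanSingleton ℝ (pdx F p.1 p.2)) :=
        (ContinuousLinearMap.toSpanSingletonCLE (𝕜 := ℝ) (E := ℝ)).continuous.comp cx
      exact this.continuousAt)
    (by
      have : Continuous (fun p : ℝ × ℝ => ContinuousLinearMap.toSpanSingleton ℝ (pdt F p.1 p.2)) :=
        (ContinuousLinearMap.toSpanSingletonCLE (𝕜 := ℝ) (E := ℝ)).continuous.comp ct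
      exact this.continuousAt)
  have h2 := HasFDerivAt.comp_hasDerivAt (f := fun s => (q s, s)) t h.hasFDerivAt (hq.prodMk (hasDerivAt_id' t))
  have e : w * pdx F (q t) t + pdt F (q t) t = (ContinuousLinearMap.coprod (ContinuousLinearMap.toSpanSingleton ℝ (pdx F (q t) t))
    (ContinuousLinearMap.toSpanSingleton ℝ (pdt F (q t) t))) (w, 1) := by
    simp
  rw [e]
  exact h2

/-- the interpolant inside a cell -/
lemma aux_interp {Q : ℕ → ℝ} {N k : ℕ} (hQ : ∀ i j : ℕ, 1 ≤ i → i < j → j ≤ N → Q i < Q j)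
    (hk : 1 ≤ k) (hkN : k < N) (f : ℝ → ℝ) {x : ℝ} (h1 : Q k < x) (h2 : x < Q (k + 1)) :
    interp Q N f x = f (Q k) * ((Q (k + 1) - x) / (Q (k + 1) - Q k))
      + f (Q (k + 1)) * ((x - Q k) / (Q (k + 1) - Q k)) := by
  have hlt : Q k < Q (k + 1) := h1.trans h2
  have hle : ∀ i j : ℕ, 1 ≤ i → i ≤ j → j ≤ N → Q i ≤ Q j := by
    intro i j hi hij hj
    rcases hij.eq_or_lt with rfl | h
    · exact le_rfl
    · exact (hQ i j hi h hj).le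
  unfold interp
  have hsub : ({k, k + 1} : Finset ℕ) ⊆ Finset.Icc 1 N := by
    intro i hi
    simp only [Finset.mem_insert, Finset.mem_singleton] at hi
    rw [Finset.mem_Icc]; omega
  rw [← Finset.sum_subset hsub, Finset.sum_pair (by omega)]
  · congr 2
    · unfold hatFun
      rw [if_neg (by omega : k ≠ N)]
      have p1 : (Q (k + 1) - x) / (Q (k + 1) - Q k) ≤ 1 := by
        rw [div_le_one (by linarith)]; linarith
      have p0 : 0 ≤ (Q (k + 1) - x) / (Q (k + 1) - Q k) :=
        div_nonneg (by linarith) (by linarith)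
      rw [min_eq_right, max_eq_right p0]
      refine p1.trans ?_
      have : (if k = 1 then Q 1 - 1 else Q (k - 1)) < Q k := by
        split_ifs with h
        · subst h; linarith
        · exact hQ _ _ (by omega) (by omega) hkN.le
      rw [le_div_iff₀ (by linarith)]; linarith
    · unfold hatFun
      rw [if_neg (by omega : k + 1 ≠ 1), Nat.add_sub_cancel]
      have p1 : (x - Q k) / (Q (k + 1) - Q k) ≤ 1 := by
        rw [div_le_one (by linarith)]; linarith
      have p0 : 0 ≤ (x - Q k) / (Q (k + 1) - Q k) :=
        div_nonneg (by linarith) (by linarith)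
      rw [min_eq_left, max_eq_right p0]
      refine p1.trans ?_
      have : Q (k + 1) < (if k + 1 = N then Q N + 1 else Q (k + 1 + 1)) := by
        split_ifs with h
        · rw [h]; linarith
        · exact hQ _ _ (by omega) (by omega) (by omega)
      rw [le_div_iff₀ (by linarith)]; linarith
  · intro i hi hi2
    rw [Finset.mem_Icc] at hi
    simp only [Finset.mem_insert, Finset.mem_singleton, not_or] at hi2
    have : hatFun Q N i x = 0 := by
      unfold hatFun
      apply max_eq_left
      rcases lt_or_gt_of_ne hi2.1 with h | h
      · apply (min_le_right _ _).trans
        rw [if_neg (by omega : i ≠ N)]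
        have := hQ i (i + 1) hi.1 (by omega) (by omega)
        have := hle (i + 1) k (by omega) (by omega) hkN.le
        exact div_nonpos_of_nonpos_of_nonneg (by linarith) (by linarith)
      · apply (min_le_left _ _).trans
        rw [if_neg (by omega : i ≠ 1)]
        have := hQ (i - 1) i (by omega) (by omega) (by omega)
        have := hle (k + 1) (i - 1) (by omega) (by omega) (by omega)
        exact div_nonpos_of_nonpos_of_nonneg (by linarith) (by linarith)
    rw [this, mul_zero]

/-- time derivative of the interpolation error inside one moving cell, with its bound -/
lemma aux_cell {φ : ℝ → ℝ → ℝ}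
    (hx0 : ∀ t, Differentiable ℝ fun x => φ x t)
    (hx1 : ∀ t, Differentiable ℝ fun x => pdx φ x t)
    (ht0 : ∀ x, Differentiable ℝ fun t => φ x t)
    (ht1 : ∀ x, Differentiable ℝ fun t => pdx φ x t)
    (cx : Continuous fun p : ℝ × ℝ => pdx φ p.1 p.2)
    (ct : Continuous fun p : ℝ × ℝ => pdt φ p.1 p.2)
    (cxx : Continuous fun p : ℝ × ℝ => pdx (pdx φ) p.1 p.2)
    (cxt : Continuous fun p : ℝ × ℝ => pdt (pdx φ) p.1 p.2)
    {A B : ℝ → ℝ} {wA wB W h t x : ℝ} (hA : HasDerivAt A wA t) (hB : HasDerivAt B wB t)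
    (hAx : A t < x) (hxB : x < B t) (hwA : |wA| ≤ W) (hwB : |wB| ≤ W) (hh : B t - A t ≤ h) :
    ∃ d, HasDerivAt (fun s => φ x s - (φ (A s) s * ((B s - x) / (B s - A s))
        + φ (B s) s * ((x - A s) / (B s - A s)))) d t ∧
      d ^ 2 ≤ 2 * (1 + W ^ 2) * h *
        ∫ ξ in (A t)..(B t), ((pdt (pdx φ) ξ t) ^ 2 + (pdx (pdx φ) ξ t) ^ 2) := by
  have hAB : A t < B t := hAx.trans hxB
  have hL : 0 < B t - A t := sub_pos.2 hAB
  have hW : 0 ≤ W := (abs_nonneg _).trans hwA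
  have dA := aux_chain hx0 ht0 cx ct hA
  have dB := aux_chain hx0 ht0 cx ct hB
  have d1 : HasDerivAt (fun s => (B s - x) / (B s - A s)) _ t :=
    (hB.sub_const x).div (hB.sub hA) hL.ne'
  have d2 : HasDerivAt (fun s => (x - A s) / (B s - A s)) _ t :=
    (hA.const_sub x).div (hB.sub hA) hL.ne'
  have dd := ((ht0 x t).hasDerivAt).sub ((dA.mul d1).add (dB.mul d2))
  refine ⟨_, dd, ?_⟩
  -- mean value theorem
  obtain ⟨ξ, hξ, hD⟩ := exists_deriv_eq_slope (fun y => φ y t) hAB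
    (hx0 t).continuous.continuousOn (hx0 t).differentiableOn
  change pdx φ ξ t = _ at hD
  have kxt : Continuous fun y => pdt (pdx φ) y t :=
    cxt.comp (by fun_prop : Continuous fun x : ℝ => (x, t))
  have kxx : Continuous fun y => pdx (pdx φ) y t :=
    cxx.comp (by fun_prop : Continuous fun x : ℝ => (x, t))
  set I1 := ∫ y in (A t)..(B t), |pdt (pdx φ) y t| with hI1
  set I2 := ∫ y in (A t)..(B t), |pdx (pdx φ) y t| with hI2
  have b1 : ∀ u ∈ Set.Icc (A t) (B t), ∀ v ∈ Set.Icc (A t) (B t),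
      |pdt φ v t - pdt φ u t| ≤ I1 := by
    intro u hu v hv
    rw [aux_dt_incr hx0 ht0 ht1 cx cxt]
    exact aux_abs_int kxt hu hv
  have b2 : ∀ u ∈ Set.Icc (A t) (B t), ∀ v ∈ Set.Icc (A t) (B t),
      |pdx φ v t - pdx φ u t| ≤ I2 := by
    intro u hu v hv
    rw [← intervalIntegral.integral_eq_sub_of_hasDerivAt (f := fun y => pdx φ y t)
      (f' := fun y => pdx (pdx φ) y t) (fun y _ => (hx1 t y).hasDerivAt)
      (kxx.intervalIntegrable _ _)]
    exact aux_abs_int kxx hu hv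
  have mA : A t ∈ Set.Icc (A t) (B t) := ⟨le_rfl, hAB.le⟩
  have mB : B t ∈ Set.Icc (A t) (B t) := ⟨hAB.le, le_rfl⟩
  have mx : x ∈ Set.Icc (A t) (B t) := ⟨hAx.le, hxB.le⟩
  have mξ : ξ ∈ Set.Icc (A t) (B t) := ⟨hξ.1.le, hξ.2.le⟩
  have hI1n : 0 ≤ I1 := (abs_nonneg _).trans (b1 _ mA _ mA)
  have hI2n : 0 ≤ I2 := (abs_nonneg _).trans (b2 _ mA _ mA)
  set s := (x - A t) / (B t - A t) with hs
  have hs0 : 0 ≤ s := div_nonneg (by linarith) hL.le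
  have hs1 : s ≤ 1 := by rw [hs, div_le_one hL]; linarith
  have hbd : ∀ d : ℝ, d = (1 - s) * (pdt φ x t - pdt φ (A t) t) + s * (pdt φ x t - pdt φ (B t) t)
      - (1 - s) * (wA * (pdx φ (A t) t - pdx φ ξ t)) - s * (wB * (pdx φ (B t) t - pdx φ ξ t)) →
      |d| ≤ I1 + W * I2 := by
    intro d hd
    have e1 := abs_le.1 (b1 _ mA _ mx)
    have e2 := abs_le.1 (b1 _ mB _ mx)
    have e3 : |wA * (pdx φ (A t) t - pdx φ ξ t)| ≤ W * I2 := by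
      rw [abs_mul]; exact mul_le_mul hwA (b2 _ mξ _ mA) (abs_nonneg _) hW
    have e4 : |wB * (pdx φ (B t) t - pdx φ ξ t)| ≤ W * I2 := by
      rw [abs_mul]; exact mul_le_mul hwB (b2 _ mξ _ mB) (abs_nonneg _) hW
    rw [abs_le] at e3 e4
    have hs1' : 0 ≤ 1 - s := by linarith
    rw [abs_le, hd]
    constructor
    · linarith [mul_le_mul_of_nonneg_left e1.1 hs1', mul_le_mul_of_nonneg_left e2.1 hs0,
        mul_le_mul_of_nonneg_left e3.2 hs1', mul_le_mul_of_nonneg_left e4.2 hs0]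
    · linarith [mul_le_mul_of_nonneg_left e1.2 hs1', mul_le_mul_of_nonneg_left e2.2 hs0,
        mul_le_mul_of_nonneg_left e3.1 hs1', mul_le_mul_of_nonneg_left e4.1 hs0]
  have c1 : I1 ^ 2 ≤ (B t - A t) * ∫ y in (A t)..(B t), (pdt (pdx φ) y t) ^ 2 := by
    refine aux_cs hAB (kxt.abs.intervalIntegrable _ _) ((kxt.pow 2).intervalIntegrable _ _) ?_
    exact Filter.Eventually.of_forall fun y => by simp
  have c2 : I2 ^ 2 ≤ (B t - A t) * ∫ y in (A t)..(B t), (pdx (pdx φ) y t) ^ 2 := by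
    refine aux_cs hAB (kxx.abs.intervalIntegrable _ _) ((kxx.pow 2).intervalIntegrable _ _) ?_
    exact Filter.Eventually.of_forall fun y => by simp
  rw [intervalIntegral.integral_add (f := fun ξ => (pdt (pdx φ) ξ t) ^ 2)
    (g := fun ξ => (pdx (pdx φ) ξ t) ^ 2) ((kxt.pow 2).intervalIntegrable _ _)
    ((kxx.pow 2).intervalIntegrable _ _)]
  have n1 : 0 ≤ ∫ y in (A t)..(B t), (pdt (pdx φ) y t) ^ 2 :=
    intervalIntegral.integral_nonneg hAB.le fun y _ => sq_nonneg _
  have n2 : 0 ≤ ∫ y in (A t)..(B t), (pdx (pdx φ) y t) ^ 2 :=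
    intervalIntegral.integral_nonneg hAB.le fun y _ => sq_nonneg _
  set X := ∫ y in (A t)..(B t), (pdt (pdx φ) y t) ^ 2
  set Y := ∫ y in (A t)..(B t), (pdx (pdx φ) y t) ^ 2
  have main : ∀ d : ℝ, |d| ≤ I1 + W * I2 → d ^ 2 ≤ 2 * (1 + W ^ 2) * h * (X + Y) := by
    intro d hd
    have f1 : d ^ 2 ≤ (I1 + W * I2) ^ 2 := by
      rw [← sq_abs d]; exact pow_le_pow_left₀ (abs_nonneg _) hd 2
    have f2 : (I1 + W * I2) ^ 2 ≤ 2 * (I1 ^ 2 + W ^ 2 * I2 ^ 2) := by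
      nlinarith [sq_nonneg (I1 - W * I2)]
    have g1 : I1 ^ 2 ≤ h * X := c1.trans (mul_le_mul_of_nonneg_right hh n1)
    have g2 : I2 ^ 2 ≤ h * Y := c2.trans (mul_le_mul_of_nonneg_right hh n2)
    have hh0 : 0 ≤ h := hL.le.trans hh
    nlinarith [mul_le_mul_of_nonneg_left g2 (sq_nonneg W), mul_nonneg hh0 n1, mul_nonneg hh0 n2,
      mul_nonneg (sq_nonneg W) (mul_nonneg hh0 n1)]
  apply main
  apply hbd
  rw [hD, hs]
  change pdt φ x t - _ = _
  field_simp
  ring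

/-- abstract time-increment bound -/
lemma aux_time {f g : ℝ → ℝ} {t0 t1 : ℝ} (h01 : t0 < t1) (hc : ContinuousOn f (Set.Icc t0 t1))
    {s : Set ℝ} (hs : s.Finite)
    (hd : ∀ t ∈ Set.Ioo t0 t1, t ∉ s → ∃ d, HasDerivAt f d t ∧ d ^ 2 ≤ g t)
    (hg : IntervalIntegrable g volume t0 t1) :
    (f t1 - f t0) ^ 2 ≤ (t1 - t0) * ∫ t in t0..t1, g t := by
  have hae : ∀ᵐ t ∂(volume.restrict (Set.Icc t0 t1)), (deriv f t) ^ 2 ≤ g t := by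
    have hfin : (s ∪ {t0, t1} : Set ℝ).Finite := hs.union (by simp)
    have h2 : ∀ᵐ t ∂(volume : Measure ℝ), t ∉ (s ∪ {t0, t1} : Set ℝ) :=
      measure_eq_zero_iff_ae_notMem.1 (hfin.measure_zero _)
    rw [ae_restrict_iff' measurableSet_Icc]
    filter_upwards [h2] with t ht hI
    simp only [Set.mem_union, Set.mem_insert_iff, Set.mem_singleton_iff, not_or] at ht
    obtain ⟨d, h3, h4⟩ := hd t ⟨lt_of_le_of_ne hI.1 (Ne.symm ht.2.1),
      lt_of_le_of_ne hI.2 ht.2.2⟩ ht.1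
    rwa [h3.deriv]
  have hint : IntervalIntegrable (deriv f) volume t0 t1 := by
    rw [intervalIntegrable_iff_integrableOn_Icc_of_le h01.le] at hg ⊢
    have h1 : IntegrableOn (fun t => 1 + g t) (Set.Icc t0 t1) :=
      (integrableOn_const (by simp)).add hg
    refine Integrable.mono' h1 (measurable_deriv f).aestronglyMeasurable ?_
    filter_upwards [hae] with t ht
    rw [Real.norm_eq_abs, abs_le]
    constructor <;> nlinarith [sq_nonneg (deriv f t - 1), sq_nonneg (deriv f t + 1)]
  rw [← integral_eq_of_hasDerivAt_off_countable_of_le f (deriv f) h01.le hs.countable hc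
    (fun t ht => by
      obtain ⟨d, h3, _⟩ := hd t ht.1 ht.2
      exact h3.differentiableAt.hasDerivAt) hint]
  exact aux_cs h01 hint hg hae

/-- locating a point in the partition -/
lemma aux_locate {Q : ℕ → ℝ} {N : ℕ} {x : ℝ} (hN : 1 ≤ N)
    (h1 : Q 1 < x) (h2 : x < Q N) (hne : ∀ i, 1 ≤ i → i ≤ N → x ≠ Q i) :
    ∃ k, 1 ≤ k ∧ k < N ∧ Q k < x ∧ x < Q (k + 1) := by
  by_contra hcon
  push Not at hcon
  have : ∀ n, n + 1 ≤ N → Q (n + 1) < x := by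
    intro n
    induction n with
    | zero => intro _; simpa using h1
    | succ m ih =>
      intro hm
      exact lt_of_le_of_ne (hcon (m + 1) (by omega) (by omega) (ih (by omega)))
        (Ne.symm (hne _ (by omega) hm))
  have h3 := this (N - 1) (by omega)
  rw [Nat.sub_add_cancel hN] at h3
  linarith

/-- continuity in time of the interpolation error -/
lemma aux_cont {φ : ℝ → ℝ → ℝ} (c0 : Continuous fun p : ℝ × ℝ => φ p.1 p.2)
    {Q : ℝ → ℕ → ℝ} {N : ℕ} {T : Set ℝ} (hQc : ∀ i, Continuous fun t => Q t i)
    (hQ : ∀ t ∈ T, ∀ i j : ℕ, 1 ≤ i → i < j → j ≤ N → Q t i < Q t j) (x : ℝ) :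
    ContinuousOn (fun t => φ x t - interp (Q t) N (fun y => φ y t) x) T := by
  have hφx : Continuous fun t => φ x t := c0.comp (by fun_prop : Continuous fun t : ℝ => (x, t))
  refine hφx.continuousOn.sub ?_
  unfold interp
  refine continuousOn_finsetSum _ fun i hi => ?_
  rw [Finset.mem_Icc] at hi
  have hq : Continuous fun t => φ (Q t i) t := c0.comp ((hQc i).prodMk continuous_id)
  refine hq.continuousOn.mul ?_
  unfold hatFun
  refine ContinuousOn.sup continuousOn_const (ContinuousOn.inf ?_ ?_)
  · have hc : Continuous fun t => (if i = 1 then Q t 1 - 1 else Q t (i - 1)) := by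
      split_ifs
      · exact (hQc 1).sub continuous_const
      · exact hQc _
    refine ContinuousOn.div (continuous_const.sub hc).continuousOn ((hQc i).sub hc).continuousOn ?_
    intro t ht
    split_ifs with h
    · subst h; simp
    · exact (sub_pos.2 (hQ t ht _ _ (by omega) (by omega) hi.2)).ne'
  · have hc : Continuous fun t => (if i = N then Q t N + 1 else Q t (i + 1)) := by
      split_ifs
      · exact (hQc N).add continuous_const
      · exact hQc _
    refine ContinuousOn.div (hc.sub continuous_const).continuousOn (hc.sub (hQc i)).continuousOn ?_
    intro t ht
    split_ifs with h
    · subst h; simp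
    · exact (sub_pos.2 (hQ t ht _ _ hi.1 (by omega) (by omega))).ne'

/-- the `L²` estimate with unfolded hypotheses -/
lemma aux_main {W a b t0 Δt h : ℝ} {N : ℕ} {P w : ℕ → ℝ} {φ : ℝ → ℝ → ℝ}
    (hab : a < b) (hΔ : 0 < Δt) (hN : 2 ≤ N)
    (hP1 : P 1 = a) (hPN : P N = b) (hP1' : P 1 + w 1 * Δt = a) (hPN' : P N + w N * Δt = b)
    (hord : ∀ t ∈ Set.Icc t0 (t0 + Δt), ∀ i j : ℕ, 1 ≤ i → i < j → j ≤ N →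
          P i + w i * (t - t0) < P j + w j * (t - t0))
    (hmesh : ∀ i : ℕ, 1 ≤ i → i < N →
          P (i + 1) - P i ≤ h ∧ (P (i + 1) + w (i + 1) * Δt) - (P i + w i * Δt) ≤ h)
    (hw : ∀ i : ℕ, 1 ≤ i → i ≤ N → |w i| ≤ W)
    (hx0 : ∀ t, Differentiable ℝ fun x => φ x t)
    (hx1 : ∀ t, Differentiable ℝ fun x => pdx φ x t)
    (ht0 : ∀ x, Differentiable ℝ fun t => φ x t)
    (ht1 : ∀ x, Differentiable ℝ fun t => pdx φ x t)
    (c0 : Continuous fun p : ℝ × ℝ => φ p.1 p.2)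
    (cx : Continuous fun p : ℝ × ℝ => pdx φ p.1 p.2)
    (ct : Continuous fun p : ℝ × ℝ => pdt φ p.1 p.2)
    (cxx : Continuous fun p : ℝ × ℝ => pdx (pdx φ) p.1 p.2)
    (cxt : Continuous fun p : ℝ × ℝ => pdt (pdx φ) p.1 p.2) :
    (∫ x in a..b,
            ((φ x (t0 + Δt)
                - interp (fun i => P i + w i * Δt) N (fun y => φ y (t0 + Δt)) x)
              - (φ x t0 - interp P N (fun y => φ y t0) x)) ^ 2)
      ≤ Δt * (2 * (1 + W ^ 2) * h ^ 2 * ∫ t in t0..(t0 + Δt), ∫ ξ in a..b,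
          ((pdt (pdx φ) ξ t) ^ 2 + (pdx (pdx φ) ξ t) ^ 2)) := by
  have h01 : t0 < t0 + Δt := by linarith
  obtain ⟨Q, hQ⟩ : ∃ Q : ℝ → ℕ → ℝ, Q = fun t i => P i + w i * (t - t0) := ⟨_, rfl⟩
  have hQa : ∀ t i, Q t i = P i + w i * (t - t0) := fun t i => by rw [hQ]
  have hQc : ∀ i, Continuous fun t => Q t i := by
    intro i; simp only [hQa]; fun_prop
  have hQd : ∀ i t, HasDerivAt (fun t => Q t i) (w i) t := by
    intro i t
    simp only [hQa]
    simpa using (((hasDerivAt_id t).sub_const t0).const_mul (w i)).const_add (P i)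
  have hQo : ∀ t ∈ Set.Icc t0 (t0 + Δt), ∀ i j : ℕ, 1 ≤ i → i < j → j ≤ N → Q t i < Q t j := by
    intro t ht i j h1 h2 h3
    rw [hQa, hQa]; exact hord t ht i j h1 h2 h3
  have hw1 : w 1 = 0 := by
    have : w 1 * Δt = 0 := by linarith
    exact (mul_eq_zero.1 this).resolve_right hΔ.ne'
  have hwN : w N = 0 := by
    have : w N * Δt = 0 := by linarith
    exact (mul_eq_zero.1 this).resolve_right hΔ.ne'
  have hQ1 : ∀ t, Q t 1 = a := by intro t; rw [hQa, hw1, hP1]; ring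
  have hQN : ∀ t, Q t N = b := by intro t; rw [hQa, hwN, hPN]; ring
  have hQh : ∀ t ∈ Set.Icc t0 (t0 + Δt), ∀ i, 1 ≤ i → i < N → Q t (i + 1) - Q t i ≤ h := by
    intro t ht i h1 h2
    obtain ⟨m1, m2⟩ := hmesh i h1 h2
    rw [hQa, hQa]
    have r1 : 0 ≤ t - t0 := by linarith [ht.1]
    have r2 : t - t0 ≤ Δt := by linarith [ht.2]
    by_cases hs : 0 ≤ w (i + 1) - w i
    · nlinarith [mul_le_mul_of_nonneg_left r2 hs]
    · push Not at hs
      nlinarith [mul_nonneg (neg_nonneg.2 hs.le) r1]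
  obtain ⟨S, hS⟩ : ∃ S : ℝ → ℝ → ℝ,
      S = fun t ξ => (pdt (pdx φ) ξ t) ^ 2 + (pdx (pdx φ) ξ t) ^ 2 := ⟨_, rfl⟩
  have hSa : ∀ t ξ, (pdt (pdx φ) ξ t) ^ 2 + (pdx (pdx φ) ξ t) ^ 2 = S t ξ :=
    fun t ξ => by rw [hS]
  have hS0 : ∀ t ξ, 0 ≤ S t ξ := fun t ξ => by rw [hS]; positivity
  have hSc : Continuous (Function.uncurry S) := by
    rw [hS]
    exact ((cxt.comp continuous_swap).pow 2).add ((cxx.comp continuous_swap).pow 2)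
  have hSct : ∀ t, Continuous (S t) := fun t => hSc.comp (Continuous.prodMk_right t)
  simp only [hSa]
  set K := 2 * (1 + W ^ 2) * h with hK
  obtain ⟨J, hJ⟩ : ∃ J : ℕ → ℝ → ℝ,
      J = fun i t => ∫ ξ in (Q t i)..(Q t (i + 1)), S t ξ := ⟨_, rfl⟩
  have hJc : ∀ i, Continuous (J i) := by
    intro i
    have : J i = fun t => (∫ ξ in (0:ℝ)..(Q t (i + 1)), S t ξ) - ∫ ξ in (0:ℝ)..(Q t i), S t ξ := by
      rw [hJ]; funext t
      rw [intervalIntegral.integral_interval_sub_left ((hSct t).intervalIntegrable _ _)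
        ((hSct t).intervalIntegrable _ _)]
    rw [this]
    exact (intervalIntegral.continuous_parametric_intervalIntegral_of_continuous hSc
      (hQc (i + 1))).sub
      (intervalIntegral.continuous_parametric_intervalIntegral_of_continuous hSc (hQc i))
  have hmh : 0 ≤ h := by
    have e1 := hQh t0 ⟨le_rfl, h01.le⟩ 1 le_rfl (by omega)
    have e2 := hQo t0 ⟨le_rfl, h01.le⟩ 1 2 le_rfl (by omega) (by omega)
    norm_num at e1
    linarith
  have hK0 : 0 ≤ K := by rw [hK]; positivity
  have hJ0 : ∀ t ∈ Set.Icc t0 (t0 + Δt), ∀ i, 1 ≤ i → i < N → 0 ≤ J i t := by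
    intro t ht i h1 h2
    rw [hJ]
    exact intervalIntegral.integral_nonneg (hQo t ht i (i + 1) h1 (by omega) (by omega)).le
      fun ξ _ => hS0 t ξ
  -- the space-time dominating function
  obtain ⟨E, hE⟩ : ∃ E : ℕ → Set (ℝ × ℝ),
      E = fun i => {p : ℝ × ℝ | Q p.2 i < p.1 ∧ p.1 < Q p.2 (i + 1)} := ⟨_, rfl⟩
  have hEm : ∀ i, MeasurableSet (E i) := by
    intro i
    rw [hE]
    have o1 : IsOpen {p : ℝ × ℝ | Q p.2 i < p.1} :=
      isOpen_lt ((hQc i).comp continuous_snd) continuous_fst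
    have o2 : IsOpen {p : ℝ × ℝ | p.1 < Q p.2 (i + 1)} :=
      isOpen_lt continuous_fst ((hQc (i + 1)).comp continuous_snd)
    exact (o1.inter o2).measurableSet
  obtain ⟨G, hG⟩ : ∃ G : ℝ → ℝ → ℝ, G = fun x t => ∑ i ∈ Finset.Ico 1 N,
      (E i).indicator (fun p : ℝ × ℝ => K * J i p.2) (x, t) := ⟨_, rfl⟩
  set μ := (volume : Measure ℝ).restrict (Set.Ioc a b) with hμ
  set ν := (volume : Measure ℝ).restrict (Set.Ioc t0 (t0 + Δt)) with hν
  have hGi : Integrable (Function.uncurry G) (μ.prod ν) := by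
    have : Function.uncurry G = fun p => ∑ i ∈ Finset.Ico 1 N,
        (E i).indicator (fun p : ℝ × ℝ => K * J i p.2) p := by
      rw [hG]; rfl
    rw [this]
    refine integrable_finsetSum _ fun i _ => ?_
    refine Integrable.indicator ?_ (hEm i)
    have hc : Continuous fun p : ℝ × ℝ => K * J i p.2 :=
      continuous_const.mul ((hJc i).comp continuous_snd)
    rw [hμ, hν, Measure.prod_restrict]
    exact (hc.continuousOn.integrableOn_compact
      ((isCompact_Icc (a := a) (b := b)).prod
        (isCompact_Icc (a := t0) (b := t0 + Δt)))).mono_set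
      (Set.prod_mono Set.Ioc_subset_Icc_self Set.Ioc_subset_Icc_self)
  -- pointwise in space
  have step1 : ∀ᵐ x ∂μ, ((φ x (t0 + Δt)
                - interp (fun i => P i + w i * Δt) N (fun y => φ y (t0 + Δt)) x)
              - (φ x t0 - interp P N (fun y => φ y t0) x)) ^ 2 ≤ Δt * ∫ t, G x t ∂ν := by
    have hfin : ((P '' (Set.Icc 1 N)) : Set ℝ).Finite := (Set.finite_Icc 1 N).image _
    have h2 : ∀ᵐ x ∂μ, x ∉ (P '' (Set.Icc 1 N) : Set ℝ) :=
      ae_restrict_of_ae (measure_eq_zero_iff_ae_notMem.1 (hfin.measure_zero _))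
    have h3 : ∀ᵐ x ∂μ, x ∈ Set.Ioc a b := ae_restrict_mem measurableSet_Ioc
    filter_upwards [h2, h3, hGi.prod_right_ae] with x hx hxm hGx
    have hxP : ∀ i, 1 ≤ i → i ≤ N → x ≠ P i := fun i h1 h2 he => hx ⟨i, ⟨h1, h2⟩, he.symm⟩
    have hxa : a < x := hxm.1
    have hxb : x < b := lt_of_le_of_ne hxm.2 (by rw [← hPN]; exact hxP N (by omega) le_rfl)
    have hexc : ({t | ∃ i ∈ Set.Icc 1 N, x = Q t i} : Set ℝ).Finite := by
      have hsub : ({t | ∃ i ∈ Set.Icc 1 N, x = Q t i} : Set ℝ) ⊆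
          (fun i => t0 + (x - P i) / w i) '' (Set.Icc 1 N) := by
        rintro t ⟨i, hi, he⟩
        refine ⟨i, hi, ?_⟩
        rw [hQa] at he
        have hwi : w i ≠ 0 := by
          intro h0
          apply hxP i hi.1 hi.2
          rw [he, h0]; ring
        have : x - P i = w i * (t - t0) := by linarith
        simp only [this]
        field_simp
        ring
      exact ((Set.finite_Icc 1 N).image _).subset hsub
    have key := aux_time (f := fun t => φ x t - interp (Q t) N (fun y => φ y t) x)
      (g := G x) h01 (aux_cont c0 hQc hQo x) hexc ?_ ?_
    · rw [intervalIntegral.integral_of_le h01.le] at key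
      have e1 : Q t0 = P := by funext i; rw [hQa]; ring
      have e2 : Q (t0 + Δt) = fun i => P i + w i * Δt := by funext i; rw [hQa]; ring
      rw [e1, e2, add_sub_cancel_left] at key
      exact key
    · intro t ht hts
      have ht' : t ∈ Set.Icc t0 (t0 + Δt) := ⟨ht.1.le, ht.2.le⟩
      obtain ⟨k, hk1, hkN, hk2, hk3⟩ := aux_locate (Q := Q t) (N := N) (x := x) (by omega)
        (by rw [hQ1]; exact hxa) (by rw [hQN]; exact hxb)
        (fun i h1 h2 he => hts ⟨i, ⟨h1, h2⟩, he⟩)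
      obtain ⟨d, hd1, hd2⟩ := aux_cell hx0 hx1 ht0 ht1 cx ct cxx cxt (hQd k t) (hQd (k + 1) t)
        hk2 hk3 (hw k hk1 hkN.le) (hw (k + 1) (by omega) (by omega)) (hQh t ht' k hk1 hkN)
      refine ⟨d, ?_, ?_⟩
      · refine hd1.congr_of_eventuallyEq ?_
        have n1 : ∀ᶠ s in nhds t, Q s k < x := (hQc k).continuousAt.eventually_lt
          continuousAt_const hk2
        have n2 : ∀ᶠ s in nhds t, x < Q s (k + 1) := continuousAt_const.eventually_lt
          (hQc (k + 1)).continuousAt hk3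
        filter_upwards [n1, n2, Icc_mem_nhds ht.1 ht.2] with s s1 s2 s3
        rw [aux_interp (hQo s s3) hk1 hkN _ s1 s2]
      · simp only [hSa] at hd2
        refine hd2.trans ?_
        have hnn : ∀ i ∈ Finset.Ico 1 N,
            0 ≤ (E i).indicator (fun p : ℝ × ℝ => K * J i p.2) (x, t) := by
          intro i hi
          rw [Finset.mem_Ico] at hi
          refine Set.indicator_apply_nonneg fun _ => mul_nonneg hK0 (hJ0 t ht' i hi.1 hi.2)
        have hs := Finset.single_le_sum hnn (Finset.mem_Ico.2 ⟨hk1, hkN⟩)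
        rw [Set.indicator_of_mem (by rw [hE]; exact ⟨hk2, hk3⟩)] at hs
        rw [hG]
        refine le_trans (le_of_eq ?_) hs
        rw [hJ]
    · rw [intervalIntegrable_iff_integrableOn_Ioc_of_le h01.le]
      exact hGx
  -- integrate in space at fixed time
  have step2 : ∀ t ∈ Set.Ioc t0 (t0 + Δt), ∫ x, G x t ∂μ ≤ K * h * ∫ ξ in a..b, S t ξ := by
    intro t ht
    have ht' : t ∈ Set.Icc t0 (t0 + Δt) := ⟨ht.1.le, ht.2⟩
    have eI : ∀ i, (fun x => (E i).indicator (fun p : ℝ × ℝ => K * J i p.2) (x, t)) =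
        (Set.Ioo (Q t i) (Q t (i + 1))).indicator fun _ => K * J i t := by
      intro i
      funext x
      rw [hE]
      simp only [Set.indicator_apply, Set.mem_ofPred_eq, Set.mem_Ioo]
    have hsum : ∑ i ∈ Finset.Ico 1 N, J i t = ∫ ξ in a..b, S t ξ := by
      rw [hJ]
      simp only
      rw [intervalIntegral.sum_integral_adjacent_intervals_Ico (by omega)
        (fun k _ => (hSct t).intervalIntegrable _ _), hQ1, hQN]
    rw [hG]
    simp only
    rw [integral_finsetSum]
    · rw [← hsum, Finset.mul_sum]
      refine Finset.sum_le_sum fun i hi => ?_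
      rw [Finset.mem_Ico] at hi
      rw [eI i, integral_indicator_const _ measurableSet_Ioo, smul_eq_mul]
      have hl := hQo t ht' i (i + 1) hi.1 (by omega) (by omega)
      have hm : μ.real (Set.Ioo (Q t i) (Q t (i + 1))) ≤ h := by
        have r1 : μ.real (Set.Ioo (Q t i) (Q t (i + 1))) ≤
            (volume : Measure ℝ).real (Set.Ioo (Q t i) (Q t (i + 1))) :=
          ENNReal.toReal_mono (by simp) (Measure.restrict_apply_le _ _)
        have r2 : (volume : Measure ℝ).real (Set.Ioo (Q t i) (Q t (i + 1)))
            = Q t (i + 1) - Q t i := by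
          rw [Real.volume_real_Ioo_of_le hl.le]
        linarith [hQh t ht' i hi.1 hi.2]
      have := mul_le_mul_of_nonneg_right hm (mul_nonneg hK0 (hJ0 t ht' i hi.1 hi.2))
      linarith
    · intro i _
      rw [eI i]
      exact (integrable_const _).indicator measurableSet_Ioo
  have hIc : Continuous fun t => ∫ ξ in a..b, S t ξ :=
    intervalIntegral.continuous_parametric_intervalIntegral_of_continuous' hSc a b
  calc _ = ∫ x, ((φ x (t0 + Δt)
                - interp (fun i => P i + w i * Δt) N (fun y => φ y (t0 + Δt)) x)
              - (φ x t0 - interp P N (fun y => φ y t0) x)) ^ 2 ∂μ :=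
        intervalIntegral.integral_of_le hab.le
    _ ≤ ∫ x, Δt * ∫ t, G x t ∂ν ∂μ :=
        integral_mono_of_nonneg (Filter.Eventually.of_forall fun x => sq_nonneg _)
          (hGi.integral_prod_left.const_mul Δt) step1
    _ = Δt * ∫ x, ∫ t, G x t ∂ν ∂μ := by rw [integral_const_mul]
    _ = Δt * ∫ t, ∫ x, G x t ∂μ ∂ν := by rw [integral_integral_swap hGi]
    _ ≤ Δt * ∫ t, (K * h * ∫ ξ in a..b, S t ξ) ∂ν := by
        refine mul_le_mul_of_nonneg_left ?_ hΔ.le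
        have hGr : Integrable (fun t => ∫ x, G x t ∂μ) ν := hGi.integral_prod_right
        refine integral_mono_ae hGr ?_ ?_
        · have := (continuous_const.mul hIc : Continuous fun t => K * h * ∫ ξ in a..b, S t ξ)
          exact (this.intervalIntegrable t0 (t0 + Δt)).1
        · filter_upwards [ae_restrict_mem measurableSet_Ioc] with t ht
          exact step2 t ht
    _ = _ := by
        rw [integral_const_mul, intervalIntegral.integral_of_le h01.le, hK, ← hν]
        ring

/-- **L² estimate for the time difference of the moving-mesh interpolation error**
`η(t) = φ(·,t) − Π_h(t)φ(·,t)`:  `(1/Δt)‖ηⁿ − ηⁿ⁻¹‖_{L²} ≤ C h/√Δt ‖φ‖_{H¹(H²)}`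
with `C = C(W)` depending only on the velocity bound `W`. -/
theorem moving_interpolation_error_time_difference
    (W : ℝ) (hW : 0 ≤ W) :
    ∃ C : ℝ, 0 < C ∧
      ∀ (a b t0 Δt h : ℝ) (N : ℕ) (P w : ℕ → ℝ) (φ : ℝ → ℝ → ℝ),
        a < b → 0 < Δt → 0 < h → 2 ≤ N →
        P 1 = a → P N = b →
        P 1 + w 1 * Δt = a → P N + w N * Δt = b →
        (∀ t ∈ Set.Icc t0 (t0 + Δt), ∀ i j : ℕ, 1 ≤ i → i < j → j ≤ N →
          P i + w i * (t - t0) < P j + w j * (t - t0)) →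
        (∀ i : ℕ, 1 ≤ i → i < N →
          P (i + 1) - P i ≤ h ∧ (P (i + 1) + w (i + 1) * Δt) - (P i + w i * Δt) ≤ h) →
        (∀ i : ℕ, 1 ≤ i → i ≤ N → |w i| ≤ W) →
        -- the partial derivatives ∂_t^j ∂_x^k φ, j ≤ 1, k ≤ 2, exist …
        (∀ k : ℕ, k < 2 → ∀ t : ℝ, Differentiable ℝ fun x => (pdx^[k] φ) x t) →
        (∀ k : ℕ, k ≤ 2 → ∀ x : ℝ, Differentiable ℝ fun t => (pdx^[k] φ) x t) →
        -- … and are continuous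
        (∀ j k : ℕ, j ≤ 1 → k ≤ 2 →
          Continuous fun p : ℝ × ℝ => (pdt^[j] (pdx^[k] φ)) p.1 p.2) →
        (1 / Δt) * Real.sqrt (∫ x in a..b,
            ((φ x (t0 + Δt)
                - interp (fun i => P i + w i * Δt) N (fun y => φ y (t0 + Δt)) x)
              - (φ x t0 - interp P N (fun y => φ y t0) x)) ^ 2)
          ≤ C * h / Real.sqrt Δt *
            Real.sqrt (∑ j ∈ Finset.range 2, ∑ k ∈ Finset.range 3,
              ∫ t in t0..(t0 + Δt), ∫ x in a..b, ((pdt^[j] (pdx^[k] φ)) x t) ^ 2) := by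
  refine ⟨Real.sqrt (2 * (1 + W ^ 2)), Real.sqrt_pos.2 (by positivity), ?_⟩
  intro a b t0 Δt h N P w φ hab hΔ hh hN hP1 hPN hP1' hPN' hord hmesh hw hdx hdt hc
  have hmain := aux_main (W := W) hab hΔ hN hP1 hPN hP1' hPN' hord hmesh hw
    (hdx 0 (by norm_num)) (hdx 1 (by norm_num)) (hdt 0 (by norm_num)) (hdt 1 (by norm_num))
    (hc 0 0 (by norm_num) (by norm_num)) (hc 0 1 (by norm_num) (by norm_num))
    (hc 1 0 (by norm_num) (by norm_num)) (hc 0 2 (by norm_num) (by norm_num))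
    (hc 1 1 (by norm_num) (by norm_num))
  have c2 : ∀ j k : ℕ, j ≤ 1 → k ≤ 2 →
      Continuous (Function.uncurry fun t x => ((pdt^[j] (pdx^[k] φ)) x t) ^ 2) :=
    fun j k hj hk => ((hc j k hj hk).comp continuous_swap).pow 2
  have hn : ∀ j k : ℕ,
      0 ≤ ∫ t in t0..(t0 + Δt), ∫ x in a..b, ((pdt^[j] (pdx^[k] φ)) x t) ^ 2 := by
    intro j k
    refine intervalIntegral.integral_nonneg (by linarith) fun t _ => ?_
    exact intervalIntegral.integral_nonneg hab.le fun x _ => sq_nonneg _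
  have hsplit : (∫ t in t0..(t0 + Δt), ∫ ξ in a..b,
        ((pdt (pdx φ) ξ t) ^ 2 + (pdx (pdx φ) ξ t) ^ 2))
      = (∫ t in t0..(t0 + Δt), ∫ x in a..b, ((pdt^[1] (pdx^[1] φ)) x t) ^ 2)
        + ∫ t in t0..(t0 + Δt), ∫ x in a..b, ((pdt^[0] (pdx^[2] φ)) x t) ^ 2 := by
    have k1 := c2 1 1 (by norm_num) (by norm_num)
    have k2 := c2 0 2 (by norm_num) (by norm_num)
    rw [← intervalIntegral.integral_add
      ((intervalIntegral.continuous_parametric_intervalIntegral_of_continuous' k1 a b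
        ).intervalIntegrable _ _)
      ((intervalIntegral.continuous_parametric_intervalIntegral_of_continuous' k2 a b
        ).intervalIntegrable _ _)]
    congr 1
    funext t
    rw [← intervalIntegral.integral_add
      (f := fun x => ((pdt^[1] (pdx^[1] φ)) x t) ^ 2)
      (g := fun x => ((pdt^[0] (pdx^[2] φ)) x t) ^ 2)
      ((k1.comp (Continuous.prodMk_right t)).intervalIntegrable _ _)
      ((k2.comp (Continuous.prodMk_right t)).intervalIntegrable _ _)]
    rfl
  set T := ∑ j ∈ Finset.range 2, ∑ k ∈ Finset.range 3,
    ∫ t in t0..(t0 + Δt), ∫ x in a..b, ((pdt^[j] (pdx^[k] φ)) x t) ^ 2 with hT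
  have hle : (∫ t in t0..(t0 + Δt), ∫ ξ in a..b,
        ((pdt (pdx φ) ξ t) ^ 2 + (pdx (pdx φ) ξ t) ^ 2)) ≤ T := by
    rw [hsplit, hT]
    simp only [Finset.sum_range_succ, Finset.sum_range_zero]
    linarith [hn 0 0, hn 0 1, hn 0 2, hn 1 0, hn 1 1, hn 1 2]
  have hT0 : 0 ≤ T := Finset.sum_nonneg fun j _ => Finset.sum_nonneg fun k _ => hn j k
  have hW2 : 0 ≤ 2 * (1 + W ^ 2) := by positivity
  have hfin := Real.sqrt_le_sqrt (hmain.trans (mul_le_mul_of_nonneg_left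
    (mul_le_mul_of_nonneg_left hle (by positivity : 0 ≤ 2 * (1 + W ^ 2) * h ^ 2)) hΔ.le))
  have e : Real.sqrt (Δt * (2 * (1 + W ^ 2) * h ^ 2 * T))
      = Real.sqrt Δt * (Real.sqrt (2 * (1 + W ^ 2)) * h * Real.sqrt T) := by
    rw [Real.sqrt_mul hΔ.le, Real.sqrt_mul (by positivity), Real.sqrt_mul hW2,
      Real.sqrt_sq hh.le]
  rw [e] at hfin
  refine (mul_le_mul_of_nonneg_left hfin (by positivity : 0 ≤ 1 / Δt)).trans (le_of_eq ?_)
  have hs : 0 < Real.sqrt Δt := Real.sqrt_pos.2 hΔ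
  have hss : Real.sqrt Δt * Real.sqrt Δt = Δt := Real.mul_self_sqrt hΔ.le
  rw [div_mul_eq_mul_div (Real.sqrt (2 * (1 + W ^ 2)) * h), eq_div_iff hs.ne', one_div]
  calc _ = Δt⁻¹ * (Real.sqrt Δt * Real.sqrt Δt)
        * (Real.sqrt (2 * (1 + W ^ 2)) * h * Real.sqrt T) := by ring
    _ = _ := by rw [hss, inv_mul_cancel₀ hΔ.ne', one_mul]
end
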